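/- arXiv:1704.00699 — 2 statements merged into one kernel-verified Lean document; each statement's English description precedes it below -/
import Mathlib

section
/- Suppose that X and Y are standard Borel spaces, that μ is a Borel probability measure on X, and that ν is a Borel measure on Y. Suppose that R ⊆ X × Y is Borel, locally finite, (μ,ν)-preserving, and expansive. Then there is a μ-conull Borel set X' ⊆ X and a Borel injection f : X' → Y compatible with R. -/
open MeasureTheory Set
open scoped ENNReal

/-- `R ⊆ X × Y` is `(μ,ν)`-preserving: every Borel bijection `f : A → B` between Borel
subsets whose graph is contained in `R` satisfies `μ(A) = ν(B)`. -/
def MeasurePreservingRel {X Y : Type*} [MeasurableSpace X] [MeasurableSpace Y]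
    (R : Set (X × Y)) (μ : Measure X) (ν : Measure Y) : Prop :=
  ∀ (A : Set X) (f : X → Y), MeasurableSet A → Measurable f → Set.InjOn f A →
    (∀ x ∈ A, (x, f x) ∈ R) → μ A = ν (f '' A)

/-!
Give the partial matchings the pseudometric `μ (set where they differ)`, for which they form a
complete space. Let `u` be the measure of the unmatched part of a matching. Expansion makes the set
reachable from the unmatched part by alternating paths grow geometrically, so a path of length
`O(log (1 / u))` reaches a free point of `Y`, and, `R` being measure preserving, a family of such
paths of positive measure can be augmented at once. This lowers `u` to some `u' < u` and moves the
matching by at most path length times gain, `O(log (1 / u)) * (u - u') ≤ K * (√u - √u')`. By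
Ekeland's variational principle some matching admits no such move, so for it `u = 0`.
-/

section Analytic

open Filter Topology

theorem isCompact_setOf_forall_le (b : ℕ → ℕ) : IsCompact {x : ℕ → ℕ | ∀ i, x i ≤ b i} := by
  convert isCompact_univ_pi fun i => (finite_Iic (b i)).isCompact using 1
  ext x
  simp [Pi.le_def]

theorem exists_setOf_forall_lt_le_subset_of_isOpen (b : ℕ → ℕ) {U : Set (ℕ → ℕ)}
    (hU : IsOpen U) (hbU : {x : ℕ → ℕ | ∀ i, x i ≤ b i} ⊆ U) :
    ∃ n, {x : ℕ → ℕ | ∀ i < n, x i ≤ b i} ⊆ U := by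
  by_contra! hcon
  simp only [not_subset] at hcon
  choose x hxb hxU using hcon
  -- Truncating the `n`-th escaping point to the box changes only coordinates from `n` on.
  obtain ⟨a, hab, φ, hφ, hlim⟩ := (isCompact_setOf_forall_le b).tendsto_subseq
    (x := fun n i => min (x n i) (b i)) fun n i => min_le_right _ _
  have hlim' : Tendsto (fun n => x (φ n)) atTop (𝓝 a) := by
    rw [tendsto_pi_nhds] at hlim ⊢
    intro i
    refine (hlim i).congr' ?_
    filter_upwards [eventually_gt_atTop i] with n hn
    exact min_eq_left (hxb (φ n) i (hn.trans_le (hφ.id_le n)))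
  obtain ⟨n, hn⟩ := (hlim'.eventually (hU.mem_nhds (hbU hab))).exists
  exact hxU _ hn

variable {X : Type*} [MeasurableSpace X]

theorem exists_forall_lt_measure_image_setOf_forall_lt_le (μ : Measure X) (f : (ℕ → ℕ) → X)
    {r : ℝ≥0∞} (hr : r < μ (range f)) :
    ∃ b : ℕ → ℕ, ∀ n, r < μ (f '' {x | ∀ i < n, x i ≤ b i}) := by
  have step (n : ℕ) (S : {S : Set (ℕ → ℕ) // r < μ (f '' S)}) :
      ∃ k, r < μ (f '' (S ∩ {x | x n ≤ k})) := by
    have hmono : Monotone fun k => f '' (S ∩ {x | x n ≤ k}) := fun k l hkl =>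
      image_mono (inter_subset_inter_right _ fun x (hx : x n ≤ k) => hx.trans hkl)
    have hS : f '' S = ⋃ k, f '' (S ∩ {x | x n ≤ k}) := by
      rw [← image_iUnion, ← inter_iUnion, iUnion_eq_univ_iff.2 fun x => ⟨x n, le_refl (x n)⟩,
        inter_univ]
    rw [← lt_iSup_iff, ← hmono.measure_iUnion, ← hS]
    exact S.2
  choose k hk using step
  let S (n : ℕ) : {S : Set (ℕ → ℕ) // r < μ (f '' S)} :=
    Nat.rec ⟨univ, by rwa [image_univ]⟩ (fun n S => ⟨S ∩ {x | x n ≤ k n S}, hk n S⟩) n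
  have hS (n : ℕ) : (S n).1 = {x | ∀ i < n, x i ≤ k i (S i)} := by
    induction n with
    | zero => simp [S]
    | succ n ih =>
      change (S n).1 ∩ {x | x n ≤ k n (S n)} = _
      simp only [ih, Nat.forall_lt_succ_right]
      rfl
  exact ⟨fun n => k n (S n), fun n => hS n ▸ (S n).2⟩

variable [TopologicalSpace X]

theorem exists_isCompact_subset_range_le_measure (μ : Measure X) [μ.OuterRegular]
    {f : (ℕ → ℕ) → X} (hf : Continuous f) {r : ℝ≥0∞} (hr : r < μ (range f)) :
    ∃ K ⊆ range f, IsCompact K ∧ r ≤ μ K := by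
  obtain ⟨b, hb⟩ := exists_forall_lt_measure_image_setOf_forall_lt_le μ f hr
  refine ⟨_, image_subset_range _ _, (isCompact_setOf_forall_le b).image hf, ?_⟩
  rw [Set.measure_eq_iInf_isOpen]
  refine le_iInf₂ fun V hV => le_iInf fun hVo => ?_
  obtain ⟨n, hn⟩ := exists_setOf_forall_lt_le_subset_of_isOpen b (hVo.preimage hf)
    (image_subset_iff.1 hV)
  exact (hb n).le.trans (measure_mono (image_subset_iff.2 hn))

theorem nullMeasurableSet_of_analyticSet [T2Space X] [OpensMeasurableSpace X] (μ : Measure X)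
    [IsFiniteMeasure μ] [μ.OuterRegular] {s : Set X} (hs : AnalyticSet s) :
    NullMeasurableSet s μ := by
  rw [AnalyticSet] at hs
  obtain rfl | ⟨f, hf, rfl⟩ := hs
  · exact nullMeasurableSet_empty
  by_cases h0 : μ (range f) = 0
  · exact .of_null h0
  obtain ⟨u, -, hu, hlim⟩ := exists_seq_strictMono_tendsto' (pos_iff_ne_zero.2 h0)
  choose K hKs hKc hK using fun n => exists_isCompact_subset_range_le_measure μ hf (hu n).2
  have hKm : MeasurableSet (⋃ n, K n) := .iUnion fun n => (hKc n).measurableSet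
  have hKle : μ (range f) ≤ μ (⋃ n, K n) :=
    le_of_tendsto' hlim fun n => (hK n).trans (measure_mono (subset_iUnion K n))
  exact hKm.nullMeasurableSet.congr
    (ae_eq_of_subset_of_measure_ge (iUnion_subset hKs) hKle hKm.nullMeasurableSet
      (measure_ne_top _ _))

end Analytic

theorem nullMeasurableSet_image_of_measurable {X Z : Type*} [MeasurableSpace X]
    [StandardBorelSpace X] [MeasurableSpace Z] [StandardBorelSpace Z] (μ : Measure X)
    [IsFiniteMeasure μ] {s : Set Z} (hs : MeasurableSet s) {f : Z → X} (hf : Measurable f) :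
    NullMeasurableSet (f '' s) μ := by
  let _ := upgradeStandardBorel X
  exact nullMeasurableSet_of_analyticSet μ (hs.analyticSet_image hf)

section Matching

variable {X Y : Type*} [MeasurableSpace X] [MeasurableSpace Y]

/-- A partial matching compatible with the relation `R`: a Borel injection of the Borel set `S`
into `Y` whose graph lies in `R`. It is encoded by a total function `f`, whose values off `S` are
irrelevant. -/
structure IsMatching (R : SetRel X Y) (S : Set X) (f : X → Y) : Prop where
  measurableSet : MeasurableSet S
  measurable : Measurable f
  injOn : InjOn f S
  mem_rel : ∀ x ∈ S, (x, f x) ∈ R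

/-- `R` is covered by the graphs of countably many of its matchings. This is what the
Lusin–Novikov theorem provides for Borel relations with countable sections. -/
def HasCountableMatchingCover (R : SetRel X Y) : Prop :=
  ∃ (D : ℕ → Set X) (h : ℕ → X → Y), (∀ n, IsMatching R (D n) (h n)) ∧
    ∀ x y, (x, y) ∈ R → ∃ n, x ∈ D n ∧ h n x = y

end Matching

section LusinNovikov

variable {X Y : Type*} [MeasurableSpace X] [StandardBorelSpace X] [MeasurableSpace Y]
  [StandardBorelSpace Y]

theorem exists_measurable_forall_mem_eq_of_injOn_fst [Nonempty Y] {G : Set (X × Y)}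
    (hG : MeasurableSet G) (hinj : InjOn Prod.fst G) :
    ∃ h : X → Y, Measurable h ∧ ∀ p ∈ G, h p.1 = p.2 := by
  have := hG.standardBorel
  have hfst : MeasurableEmbedding fun p : G => p.1.1 :=
    (measurable_fst.comp measurable_subtype_coe).measurableEmbedding (injOn_iff_injective.1 hinj)
  obtain ⟨h, hh, hcomp⟩ := hfst.exists_measurable_extend
    (measurable_snd.comp measurable_subtype_coe) fun _ => ‹Nonempty Y›
  exact ⟨h, hh, fun p hp => congr_fun hcomp ⟨p, hp⟩⟩

theorem exists_seq_measurableSet_isolating (X : Type*) [MeasurableSpace X]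
    [StandardBorelSpace X] :
    ∃ B : ℕ → Set X, (∀ n, MeasurableSet (B n)) ∧
      ∀ F : Set X, F.Finite → ∀ x, ∃ n, x ∈ B n ∧ ∀ x' ∈ F, x' ∈ B n → x' = x := by
  let _ := upgradeStandardBorel X
  obtain ⟨B, hB⟩ := ((TopologicalSpace.countable_countableBasis X).insert
    ∅).exists_eq_range (insert_nonempty _ _)
  refine ⟨B, fun n => ?_, fun F hF x => ?_⟩
  · obtain h | h : B n ∈ insert ∅ (TopologicalSpace.countableBasis X) := hB ▸ mem_range_self n
    exacts [h ▸ .empty, (TopologicalSpace.isOpen_of_mem_countableBasis h).measurableSet]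
  · have hopen : IsOpen (F \ {x})ᶜ := (hF.subset sdiff_subset).isClosed.isOpen_compl
    obtain ⟨V, hV, hxV, hVF⟩ :=
      (TopologicalSpace.isBasis_countableBasis X).exists_subset_of_mem_open (a := x) (by simp) hopen
    obtain ⟨n, rfl⟩ : V ∈ range B := hB ▸ mem_insert_of_mem _ hV
    exact ⟨n, hxV, fun x' hx' hn => by_contra fun hne => hVF hn ⟨hx', hne⟩⟩

/-- The domain of the part of `Q` that is a matching: the points with a unique `Q`-neighbour,
of which they are themselves the only `Q`-neighbour. -/
def isolatedDomain {X Y : Type*} (Q : SetRel X Y) : Set X :=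
  {x | ∃ y, (x, y) ∈ Q ∧ (∀ y', (x, y') ∈ Q → y' = y) ∧ ∀ x', (x', y) ∈ Q → x' = x}

theorem nullMeasurableSet_isolatedDomain (μ : Measure X) [IsFiniteMeasure μ] {Q : SetRel X Y}
    (hQ : MeasurableSet Q) : NullMeasurableSet (isolatedDomain Q) μ := by
  let F₁ : Set (X × Y × Y) := {p | (p.1, p.2.1) ∈ Q ∧ (p.1, p.2.2) ∈ Q ∧ p.2.2 ≠ p.2.1}
  let F₂ : Set (X × Y × X) := {p | (p.1, p.2.1) ∈ Q ∧ (p.2.2, p.2.1) ∈ Q ∧ p.2.2 ≠ p.1}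
  have hF₁ : MeasurableSet F₁ :=
    (measurableSet_preimage (by fun_prop) hQ).inter <|
      (measurableSet_preimage (by fun_prop) hQ).inter
        (measurableSet_eq_fun (by fun_prop) (by fun_prop)).compl
  have hF₂ : MeasurableSet F₂ :=
    (measurableSet_preimage (by fun_prop) hQ).inter <|
      (measurableSet_preimage (by fun_prop) hQ).inter
        (measurableSet_eq_fun (by fun_prop) (by fun_prop)).compl
  have heq : isolatedDomain Q = (Prod.fst '' Q \ Prod.fst '' F₁) \ Prod.fst '' F₂ := by
    ext x
    simp only [isolatedDomain, F₁, F₂, mem_ofPred_eq, mem_sdiff, mem_image, Prod.exists]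
    grind
  rw [heq]
  exact ((nullMeasurableSet_image_of_measurable μ hQ measurable_fst).diff
    (nullMeasurableSet_image_of_measurable μ hF₁ measurable_fst)).diff
    (nullMeasurableSet_image_of_measurable μ hF₂ measurable_fst)

theorem exists_isMatching_ae_mem_of_mem_isolatedDomain [Nonempty Y] (μ : Measure X)
    [IsFiniteMeasure μ] {Q : SetRel X Y} (hQ : MeasurableSet Q) :
    ∃ D h, IsMatching Q D h ∧
      ∀ᵐ x ∂μ, x ∈ isolatedDomain Q → x ∈ D ∧ ∀ y, (x, y) ∈ Q → h x = y := by
  obtain ⟨D, hDsub, hD, hDae⟩ :=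
    (nullMeasurableSet_isolatedDomain μ hQ).exists_measurable_subset_ae_eq
  obtain ⟨h, hm, hh⟩ := exists_measurable_forall_mem_eq_of_injOn_fst
    (hQ.inter (measurable_fst hD)) (by
      rintro ⟨x, y⟩ ⟨hxy, hx⟩ ⟨x', y'⟩ ⟨hxy', -⟩ (rfl : x = x')
      obtain ⟨z, -, hz, -⟩ := hDsub hx
      rw [hz y hxy, hz y' hxy'])
  have hmem : ∀ x ∈ D, (x, h x) ∈ Q := fun x hx => by
    obtain ⟨y, hxy, -⟩ := hDsub hx
    rwa [hh _ ⟨hxy, hx⟩]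
  refine ⟨D, h, ⟨hD, hm, fun x hx x' hx' heq => ?_, hmem⟩, ?_⟩
  · obtain ⟨y, -, hy, hy'⟩ := hDsub hx
    have hxy : h x' = y := heq ▸ hy _ (hmem x hx)
    exact (hy' x' (hxy ▸ hmem x' hx')).symm
  · filter_upwards [hDae.mem_iff] with x hx hxQ
    exact ⟨hx.2 hxQ, fun y hxy => hh _ ⟨hxy, hx.2 hxQ⟩⟩

theorem exists_subset_hasCountableMatchingCover [Nonempty Y] (μ : Measure X) [IsFiniteMeasure μ]
    {R : SetRel X Y} (hR : MeasurableSet R) (hfinX : ∀ x, {y | (x, y) ∈ R}.Finite)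
    (hfinY : ∀ y, {x | (x, y) ∈ R}.Finite) :
    ∃ R' ⊆ R, HasCountableMatchingCover R' ∧ ∀ᵐ x ∂μ, ∀ y, (x, y) ∈ R → (x, y) ∈ R' := by
  obtain ⟨B, hB, hBiso⟩ := exists_seq_measurableSet_isolating X
  obtain ⟨C, hC, hCiso⟩ := exists_seq_measurableSet_isolating Y
  choose D h hDh hae using fun n : ℕ => exists_isMatching_ae_mem_of_mem_isolatedDomain μ
    (hR.inter ((hB n.unpair.1).prod (hC n.unpair.2)))
  refine ⟨{p | ∃ n, p.1 ∈ D n ∧ h n p.1 = p.2}, ?_, ⟨D, h, fun n => ?_, fun x y => id⟩, ?_⟩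
  · rintro ⟨x, y⟩ ⟨n, hx, hxy : h n x = y⟩
    exact hxy ▸ ((hDh n).mem_rel x hx).1
  · exact { hDh n with mem_rel := fun x hx => ⟨n, hx, rfl⟩ }
  · filter_upwards [ae_all_iff.2 hae] with x hx y hxy
    obtain ⟨i, hi, hi'⟩ := hBiso _ (hfinY y) x
    obtain ⟨j, hj, hj'⟩ := hCiso _ (hfinX x) y
    have hxyQ : (x, y) ∈ R ∩ B (Nat.pair i j).unpair.1 ×ˢ C (Nat.pair i j).unpair.2 := by
      simpa [hi, hj] using hxy
    obtain ⟨hD, hh⟩ := hx (Nat.pair i j) ⟨y, hxyQ, fun y' h' => hj' y' h'.1 (by simpa using h'.2.2),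
      fun x' h' => hi' x' h'.1 (by simpa using h'.2.1)⟩
    exact ⟨_, hD, hh y hxyQ⟩

end LusinNovikov

section AlternatingPaths

variable {X Y : Type*} [MeasurableSpace X] [MeasurableSpace Y] {R : SetRel X Y} {μ : Measure X}
  {ν : Measure Y} {S T P : Set X} {f g : X → Y}

theorem MeasurePreservingRel.mono {R' : SetRel X Y} (hR : MeasurePreservingRel R μ ν)
    (hR' : R' ⊆ R) : MeasurePreservingRel R' μ ν :=
  fun A f hA hf hinj hmem => hR A f hA hf hinj fun x hx => hR' (hmem x hx)

/-- `R` is expansive with constant `c`: the `R`-neighbourhood of a Borel set `A` has measure at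
least `c * μ A`. -/
def ExpansiveRel {X Y : Type*} [MeasurableSpace X] [MeasurableSpace Y] (R : SetRel X Y)
    (μ : Measure X) (ν : Measure Y) (c : ℝ≥0∞) : Prop :=
  ∀ A, MeasurableSet A → c * μ A ≤ ν (R.image A)

namespace ExpansiveRel

variable {c c' : ℝ≥0∞}

theorem mono_const (hR : ExpansiveRel R μ ν c) (hc : c' ≤ c) : ExpansiveRel R μ ν c' :=
  fun A hA => (mul_le_mul_left hc _).trans (hR A hA)

theorem mono_ae {R' : SetRel X Y} (hR : ExpansiveRel R μ ν c)
    (hRR' : ∀ᵐ x ∂μ, ∀ y, (x, y) ∈ R → (x, y) ∈ R') : ExpansiveRel R' μ ν c := by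
  intro A hA
  obtain ⟨Z, hZ, hZm, hZ0⟩ := exists_measurable_superset_of_null hRR'
  rw [← measure_sdiff_null hZ0]
  refine (hR (A \ Z) (hA.diff hZm)).trans (measure_mono ?_)
  rintro y ⟨x, ⟨hxA, hxZ⟩, hxy⟩
  exact ⟨x, hxA, not_imp_comm.1 (@hZ x) hxZ y hxy⟩

theorem nonempty [NeZero μ] (hR : ExpansiveRel R μ ν c) (hc : c ≠ 0) : Nonempty Y := by
  by_contra! hY
  have h0 : c * μ univ ≤ 0 := by simpa only [eq_empty_of_isEmpty, measure_empty] using hR univ .univ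
  exact mul_ne_zero hc (NeZero.ne _) (nonpos_iff_eq_zero.1 h0)

end ExpansiveRel

namespace IsMatching

theorem mono (hf : IsMatching R S f) (hT : MeasurableSet T) (hTS : T ⊆ S) : IsMatching R T f where
  measurableSet := hT
  measurable := hf.measurable
  injOn := hf.injOn.mono hTS
  mem_rel x hx := hf.mem_rel x (hTS hx)

theorem measure_image (hf : IsMatching R S f) (hR : MeasurePreservingRel R μ ν) :
    ν (f '' S) = μ S :=
  (hR S f hf.measurableSet hf.measurable hf.injOn hf.mem_rel).symm

theorem measurableSet_image [StandardBorelSpace X] [MeasurableSpace.CountablySeparated Y]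
    (hf : IsMatching R S f) : MeasurableSet (f '' S) :=
  hf.measurableSet.image_of_measurable_injOn hf.measurable hf.injOn

open Classical in
theorem piecewise (hf : IsMatching R S f) (hg : IsMatching R T g) (hST : Disjoint S T)
    (hdisj : Disjoint (f '' S) (g '' T)) : IsMatching R (S ∪ T) (S.piecewise f g) := by
  have hfS : EqOn f (S.piecewise f g) S := (piecewise_eqOn S f g).symm
  have hgT : EqOn g (S.piecewise f g) T := fun x hx =>
    (piecewise_eq_of_notMem _ _ _ (hST.notMem_of_mem_right hx)).symm
  refine ⟨hf.measurableSet.union hg.measurableSet, hf.measurable.piecewise hf.measurableSet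
    hg.measurable, (injOn_union hST).2 ⟨hf.injOn.congr hfS, hg.injOn.congr hgT, ?_⟩, ?_⟩
  · intro x hx y hy
    rw [← hfS hx, ← hgT hy]
    exact hdisj.ne_of_mem (mem_image_of_mem f hx) (mem_image_of_mem g hy)
  · rintro x (hx | hx)
    · exact hfS hx ▸ hf.mem_rel x hx
    · exact hgT hx ▸ hg.mem_rel x hx

end IsMatching

namespace HasCountableMatchingCover

theorem measurableSet_image [StandardBorelSpace X] [MeasurableSpace.CountablySeparated Y]
    (hR : HasCountableMatchingCover R) {A : Set X} (hA : MeasurableSet A) :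
    MeasurableSet (R.image A) := by
  obtain ⟨D, h, hDh, hcov⟩ := hR
  have hA_image : R.image A = ⋃ n, h n '' (A ∩ D n) := by
    refine Subset.antisymm ?_ (iUnion_subset fun n => ?_)
    · rintro y ⟨x, hx, hxy⟩
      obtain ⟨n, hn, hxy⟩ := hcov x y hxy
      exact mem_iUnion.2 ⟨n, x, ⟨hx, hn⟩, hxy⟩
    · rintro _ ⟨x, ⟨hx, hn⟩, rfl⟩
      exact ⟨x, hx, (hDh n).mem_rel x hn⟩
  rw [hA_image]
  exact .iUnion fun n =>
    ((hDh n).mono (hA.inter (hDh n).measurableSet) inter_subset_right).measurableSet_image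

theorem exists_isMatching_image_subset (hR : HasCountableMatchingCover R)
    (hpres : MeasurePreservingRel R μ ν) {A : Set X} (hA : MeasurableSet A) {B : Set Y}
    (hB : MeasurableSet B) (hBA : B ⊆ R.image A) (hνB : ν B ≠ 0) :
    ∃ E ⊆ A, ∃ h, IsMatching R E h ∧ h '' E ⊆ B ∧ μ E ≠ 0 := by
  obtain ⟨D, h, hDh, hcov⟩ := hR
  let E (n : ℕ) : Set X := A ∩ D n ∩ h n ⁻¹' B
  have hE (n : ℕ) : IsMatching R (E n) (h n) :=
    (hDh n).mono ((hA.inter (hDh n).measurableSet).inter ((hDh n).measurable hB))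
      (inter_subset_left.trans inter_subset_right)
  have hBE : B ⊆ ⋃ n, h n '' E n := fun y hy => by
    obtain ⟨x, hx, hxy⟩ := hBA hy
    obtain ⟨n, hn, rfl⟩ := hcov x y hxy
    exact mem_iUnion.2 ⟨n, x, ⟨⟨hx, hn⟩, hy⟩, rfl⟩
  obtain ⟨n, hn⟩ : ∃ n, ν (h n '' E n) ≠ 0 := by
    by_contra! h0
    exact hνB (measure_mono_null hBE (measure_iUnion_null h0))
  exact ⟨E n, inter_subset_left.trans inter_subset_left, h n, hE n,
    (image_mono inter_subset_right).trans (image_preimage_subset _ _),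
    (hE n).measure_image hpres ▸ hn⟩

end HasCountableMatchingCover

/-- The points joined to a point outside `S` by a path that alternates between edges of `R` and
edges of the matching `f` of `S`, and uses at most `n` of the latter. -/
def alternatingReach {X Y : Type*} (R : SetRel X Y) (S : Set X) (f : X → Y) : ℕ → Set X
  | 0 => Sᶜ
  | n + 1 => alternatingReach R S f n ∪ S ∩ f ⁻¹' R.image (alternatingReach R S f n)

/-- A rerouting of the matching `f` of `S` along alternating paths with vertex set `P` in `X`:
the points of `P \ T` take over, through `b`, the partners of the matched points of `P`, so that
the starting points `T` of the paths become free. -/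
structure IsRerouting (R : SetRel X Y) (S : Set X) (f : X → Y) (T P : Set X) (b : X → Y) :
    Prop where
  measurableSet_free : MeasurableSet T
  measurableSet : MeasurableSet P
  free_subset : T ⊆ P
  isMatching : IsMatching R (P \ T) b
  image_eq : b '' (P \ T) = f '' (P ∩ S)

namespace IsRerouting

variable {b h : X → Y} {C : Set X}

theorem measure_sdiff [IsFiniteMeasure μ] (hb : IsRerouting R S f T P b) (hf : IsMatching R S f)
    (hpres : MeasurePreservingRel R μ ν) : μ (P \ S) = μ T := by
  have hPS : μ (P \ T) = μ (P ∩ S) := by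
    rw [← hb.isMatching.measure_image hpres, hb.image_eq,
      (hf.mono (hb.measurableSet.inter hf.measurableSet) inter_subset_right).measure_image hpres]
  have hsplit : μ (P ∩ S) + μ (P \ S) = μ (P ∩ S) + μ T := by
    rw [measure_inter_add_sdiff P hf.measurableSet, ← hPS,
      ← measure_inter_add_sdiff P hb.measurableSet_free, inter_eq_right.2 hb.free_subset, add_comm]
  exact (ENNReal.add_right_inj (measure_ne_top μ _)).1 hsplit

theorem of_disjoint (hf : IsMatching R S f) (hC : MeasurableSet C) (hCS : Disjoint C S) :
    IsRerouting R S f C C f where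
  measurableSet_free := hC
  measurableSet := hC
  free_subset := subset_rfl
  isMatching := by
    rw [sdiff_self]
    exact hf.mono .empty (empty_subset S)
  image_eq := by rw [sdiff_self, hCS.inter_eq]

open Classical in
theorem isMatching_piecewise (hb : IsRerouting R S f T P b) (hh : IsMatching R T h)
    (hdisj : Disjoint (h '' T) (f '' (P ∩ S))) : IsMatching R P (T.piecewise h b) :=
  union_sdiff_cancel hb.free_subset ▸
    hh.piecewise hb.isMatching disjoint_sdiff_right (hb.image_eq ▸ hdisj)

open Classical in
theorem image_piecewise (hb : IsRerouting R S f T P b) (h : X → Y) :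
    T.piecewise h b '' P = h '' T ∪ f '' (P ∩ S) := by
  rw [← hb.image_eq, ← (piecewise_eqOn T h b).image_eq,
    ← ((piecewise_eqOn_compl T h b).mono fun x hx => hx.2 : EqOn _ b (P \ T)).image_eq,
    ← image_union, union_sdiff_cancel hb.free_subset]

open Classical in
theorem prepend [StandardBorelSpace X] [MeasurableSpace.CountablySeparated Y]
    (hb : IsRerouting R S f T P b) (hf : IsMatching R S f) (hh : IsMatching R T h)
    (hC : MeasurableSet C) (hCS : C ⊆ S) (hCP : Disjoint C P) (hhT : h '' T ⊆ f '' C) :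
    IsRerouting R S f (C ∩ f ⁻¹' (h '' T)) (P ∪ C ∩ f ⁻¹' (h '' T)) (T.piecewise h b) := by
  set T' := C ∩ f ⁻¹' (h '' T) with hT'
  have hT'm : MeasurableSet T' := hC.inter (hf.measurable hh.measurableSet_image)
  have hT'P : Disjoint T' P := hCP.mono_left inter_subset_left
  have hT'S : T' ⊆ S := inter_subset_left.trans hCS
  have himage : f '' T' = h '' T := by rw [hT', image_inter_preimage, inter_eq_right.2 hhT]
  have hPT' : (P ∪ T') \ T' = P := by rw [union_sdiff_right, hT'P.symm.sdiff_eq_left]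
  refine ⟨hT'm, hb.measurableSet.union hT'm, subset_union_right, ?_, ?_⟩
  · rw [hPT']
    exact hb.isMatching_piecewise hh <| himage ▸
      (hT'P.mono_right inter_subset_left).image hf.injOn hT'S inter_subset_right
  · rw [hPT', hb.image_piecewise, union_inter_distrib_right, inter_eq_left.2 hT'S, image_union,
      himage, union_comm]

end IsRerouting

namespace IsMatching

variable [StandardBorelSpace X] [MeasurableSpace.CountablySeparated Y]

theorem measurableSet_alternatingReach (hf : IsMatching R S f) (hR : HasCountableMatchingCover R)
    (n : ℕ) : MeasurableSet (alternatingReach R S f n) := by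
  induction n with
  | zero => exact hf.measurableSet.compl
  | succ n ih =>
    exact ih.union (hf.measurableSet.inter (hf.measurable (hR.measurableSet_image ih)))

theorem exists_isRerouting (hf : IsMatching R S f) (hR : HasCountableMatchingCover R)
    (hpres : MeasurePreservingRel R μ ν) (n : ℕ) {C : Set X} (hC : MeasurableSet C)
    (hCn : C ⊆ alternatingReach R S f n) (hμC : μ C ≠ 0) :
    ∃ T ⊆ C, ∃ P ⊆ alternatingReach R S f n, ∃ b, IsRerouting R S f T P b ∧ μ T ≠ 0 ∧
      μ P ≤ (n + 1) * μ T := by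
  induction n generalizing C with
  | zero =>
    exact ⟨C, subset_rfl, C, hCn, f, .of_disjoint hf hC (subset_compl_iff_disjoint_right.1 hCn),
      hμC, by simp⟩
  | succ n ih =>
    have hAm := hf.measurableSet_alternatingReach hR n
    set A := alternatingReach R S f n
    by_cases hCA : μ (C ∩ A) = 0
    · obtain ⟨hC'm, hC'A, hμC'⟩ : MeasurableSet (C \ A) ∧ C \ A ⊆ S ∩ f ⁻¹' R.image A ∧
          μ (C \ A) ≠ 0 :=
        ⟨hC.diff hAm, sdiff_subset_iff.2 hCn,
          by rwa [← measure_inter_add_sdiff C hAm, hCA, zero_add] at hμC⟩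
      have hfC' : IsMatching R (C \ A) f := hf.mono hC'm (hC'A.trans inter_subset_left)
      obtain ⟨E, hEA, h, hh, hEC, hμE⟩ := hR.exists_isMatching_image_subset hpres hAm
        hfC'.measurableSet_image (image_subset_iff.2 (hC'A.trans inter_subset_right))
        (hfC'.measure_image hpres ▸ hμC')
      obtain ⟨T, hTE, P, hPA, b, hb, hμT, hμP⟩ := ih hh.measurableSet hEA hμE
      have hhT : IsMatching R T h := hh.mono hb.measurableSet_free hTE
      have hhTC : h '' T ⊆ f '' (C \ A) := (image_mono hTE).trans hEC
      have hb' := hb.prepend hf hhT hC'm (hC'A.trans inter_subset_left)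
        (disjoint_sdiff_left.mono_right hPA) hhTC
      set T' := (C \ A) ∩ f ⁻¹' (h '' T) with hT'
      have hμT' : μ T' = μ T := by
        rw [← (hfC'.mono hb'.measurableSet_free inter_subset_left).measure_image hpres,
          hT', image_inter_preimage, inter_eq_right.2 hhTC, hhT.measure_image hpres]
      refine ⟨T', inter_subset_left.trans sdiff_subset, P ∪ T', union_subset_union hPA
        (inter_subset_left.trans hC'A), _, hb', hμT'.symm ▸ hμT, ?_⟩
      calc μ (P ∪ T') ≤ (n + 1) * μ T + μ T :=
            (measure_union_le P T').trans (add_le_add hμP hμT'.le)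
        _ = ((n + 1 : ℕ) + 1) * μ T' := by rw [hμT']; push_cast; ring
    · obtain ⟨T, hTC, P, hPA, b, hb, hμT, hμP⟩ := ih (hC.inter hAm) inter_subset_right hCA
      refine ⟨T, hTC.trans inter_subset_left, P, hPA.trans subset_union_left, b, hb, hμT,
        hμP.trans ?_⟩
      gcongr
      simp

theorem exists_augment [IsFiniteMeasure μ] (hf : IsMatching R S f)
    (hR : HasCountableMatchingCover R) (hpres : MeasurePreservingRel R μ ν) (n : ℕ)
    (hn : ν (R.image (alternatingReach R S f n) \ f '' S) ≠ 0) :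
    ∃ S' f', IsMatching R S' f' ∧ S ⊆ S' ∧ μ (S' \ S) ≠ 0 ∧
      μ (S' \ S ∪ {x | f x ≠ f' x}) ≤ (n + 1) * μ (S' \ S) := by
  classical
  have hAm := hf.measurableSet_alternatingReach hR n
  obtain ⟨E, hEA, h, hh, hEf, hμE⟩ := hR.exists_isMatching_image_subset hpres hAm
    ((hR.measurableSet_image hAm).diff hf.measurableSet_image) sdiff_subset hn
  obtain ⟨T, hTE, P, -, b, hb, hμT, hμP⟩ :=
    hf.exists_isRerouting hR hpres n hh.measurableSet hEA hμE
  have hhT : IsMatching R T h := hh.mono hb.measurableSet_free hTE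
  have hhfS : Disjoint (h '' T) (f '' S) :=
    disjoint_sdiff_left.mono_left ((image_mono hTE).trans hEf)
  have hhb : IsMatching R P (T.piecewise h b) :=
    hb.isMatching_piecewise hhT (hhfS.mono_right (image_mono inter_subset_right))
  have hPf : Disjoint (T.piecewise h b '' P) (f '' (S \ P)) := by
    rw [hb.image_piecewise, disjoint_union_left]
    exact ⟨hhfS.mono_right (image_mono sdiff_subset),
      (disjoint_sdiff_right.mono_left inter_subset_left).image hf.injOn inter_subset_right
        sdiff_subset⟩
  refine ⟨P ∪ S, P.piecewise (T.piecewise h b) f, ?_, subset_union_right, ?_⟩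
  · rw [← union_sdiff_self]
    exact hhb.piecewise (hf.mono (hf.measurableSet.diff hb.measurableSet) sdiff_subset)
      disjoint_sdiff_right hPf
  · rw [union_sdiff_right, hb.measure_sdiff hf hpres]
    refine ⟨hμT, (measure_mono (union_subset sdiff_subset fun x hx => ?_)).trans hμP⟩
    by_contra hxP
    exact hx (piecewise_eq_of_notMem _ _ _ hxP).symm

theorem exists_measure_image_alternatingReach_sdiff_ne_zero (hf : IsMatching R S f)
    (hR : HasCountableMatchingCover R) (hpres : MeasurePreservingRel R μ ν) {c : ℝ≥0∞}
    (hexp : ExpansiveRel R μ ν c) {N : ℕ}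
    (hN : μ univ < c ^ N * μ Sᶜ) :
    ∃ n < N, ν (R.image (alternatingReach R S f n) \ f '' S) ≠ 0 := by
  by_contra! h0
  have hgrow : ∀ n ≤ N, c ^ n * μ Sᶜ ≤ μ (alternatingReach R S f n) := by
    intro n hn
    induction n with
    | zero => simp [alternatingReach]
    | succ n ih =>
      set A := alternatingReach R S f n
      have hAm : MeasurableSet A := hf.measurableSet_alternatingReach hR n
      have hmatched : IsMatching R (S ∩ f ⁻¹' R.image A) f := hf.mono
        (hf.measurableSet.inter (hf.measurable (hR.measurableSet_image hAm))) inter_subset_left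
      calc c ^ (n + 1) * μ Sᶜ = c * (c ^ n * μ Sᶜ) := by ring
        _ ≤ c * μ A := by gcongr; exact ih (by omega)
        _ ≤ ν (R.image A) := hexp A hAm
        _ = ν (R.image A ∩ f '' S) := by
          rw [← measure_inter_add_sdiff _ hf.measurableSet_image, h0 n hn, add_zero]
        _ = μ (S ∩ f ⁻¹' R.image A) := by
          rw [← hmatched.measure_image hpres, image_inter_preimage, inter_comm]
        _ ≤ μ (alternatingReach R S f (n + 1)) := measure_mono subset_union_right
  exact (hN.trans_le (hgrow N le_rfl)).not_ge (measure_mono (subset_univ _))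

end IsMatching

end AlternatingPaths

section Ekeland

open Filter Topology

theorem exists_dist_le_sub_forall_lt_add {α : Type*} [PseudoMetricSpace α] {ψ : α → ℝ}
    (hbdd : BddBelow (range ψ)) (x : α) {ε : ℝ} (hε : 0 < ε) :
    ∃ y, dist x y ≤ ψ x - ψ y ∧ ∀ z, dist x z ≤ ψ x - ψ z → ψ y < ψ z + ε := by
  let s : Set α := {y | dist x y ≤ ψ x - ψ y}
  have hs : (ψ '' s).Nonempty := ⟨ψ x, x, by simp [s], rfl⟩
  obtain ⟨_, ⟨y, hy, rfl⟩, hlt⟩ := exists_lt_of_csInf_lt hs (lt_add_of_pos_right _ hε)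
  refine ⟨y, hy, fun z hz => hlt.trans_le (add_le_add_left ?_ _)⟩
  exact csInf_le (hbdd.mono (image_subset_range _ _)) (mem_image_of_mem ψ hz)

-- A form of Ekeland's variational principle: `a` is minimal for the Brønsted order
-- `b ≼ a ↔ dist a b ≤ ψ a - ψ b`.
theorem exists_forall_eq_of_dist_le_sub {α : Type*} [PseudoMetricSpace α] [CompleteSpace α]
    [Nonempty α] {ψ : α → ℝ} (hψ : LowerSemicontinuous ψ) (hbdd : BddBelow (range ψ)) :
    ∃ a, ∀ b, dist a b ≤ ψ a - ψ b → ψ b = ψ a := by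
  choose next hdist hnear using fun (k : ℕ) x =>
    exists_dist_le_sub_forall_lt_add hbdd x (by positivity : (0 : ℝ) < (1 / 2) ^ k)
  let u : ℕ → α := fun n => Nat.rec (Classical.arbitrary α) next n
  have hu {k j : ℕ} (hkj : k ≤ j) : dist (u k) (u j) ≤ ψ (u k) - ψ (u j) := by
    induction j, hkj using Nat.le_induction with
    | base => simp
    | succ j _ ih => linarith [dist_triangle (u k) (u j) (u (j + 1)), hdist j (u j)]
  have hanti : Antitone (ψ ∘ u) := fun k j hkj => sub_nonneg.1 (dist_nonneg.trans (hu hkj))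
  have hbdd' : BddBelow (range (ψ ∘ u)) := hbdd.mono (range_comp_subset_range u ψ)
  have hcauchy : CauchySeq u := by
    refine cauchySeq_of_le_tendsto_0' (fun k => ψ (u k) - ⨅ j, ψ (u j))
      (fun k j hkj => (hu hkj).trans (sub_le_sub_left (ciInf_le hbdd' j) _)) ?_
    simpa using (tendsto_atTop_ciInf hanti hbdd').sub_const (⨅ j, ψ (u j))
  obtain ⟨a, ha⟩ := cauchySeq_tendsto_of_complete hcauchy
  have hua (k : ℕ) : dist (u k) a ≤ ψ (u k) - ψ a := by
    have hclosed : IsClosed {y | dist (u k) y + ψ y ≤ ψ (u k)} :=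
      ((continuous_const.dist continuous_id).lowerSemicontinuous.add hψ).isClosed_preimage _
    refine le_sub_iff_add_le.2 (hclosed.mem_of_tendsto ha ?_)
    filter_upwards [eventually_ge_atTop k] with j hkj using le_sub_iff_add_le.1 (hu hkj)
  refine ⟨a, fun b hab => le_antisymm (sub_nonneg.1 (dist_nonneg.trans hab)) ?_⟩
  have hle (k : ℕ) : ψ a ≤ ψ b + (1 / 2) ^ k := by
    have hkb : dist (u k) b ≤ ψ (u k) - ψ b := by linarith [dist_triangle (u k) a b, hua k]
    have hka : ψ a ≤ ψ (u (k + 1)) := sub_nonneg.1 (dist_nonneg.trans (hua (k + 1)))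
    exact hka.trans (hnear k (u k) b hkb).le
  have hlim : Tendsto (fun k : ℕ => ψ b + (1 / 2 : ℝ) ^ k) atTop (𝓝 (ψ b + 0)) :=
    (tendsto_pow_atTop_nhds_zero_of_lt_one (by norm_num) (by norm_num)).const_add _
  simpa using ge_of_tendsto' hlim hle

end Ekeland

-- The number of steps needed to grow from `u` past `M` at rate `c` is logarithmic in `M / u`,
-- hence at most of order `√(M / u)`.
theorem exists_lt_pow_mul_and_mul_sqrt_le {c M u : ℝ} (hc : 1 < c) (hu : 0 < u) (huM : u ≤ M) :
    ∃ N : ℕ, M < c ^ N * u ∧ N * √u ≤ (1 + 2 / Real.log c) * √M := by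
  have hlogc : 0 < Real.log c := Real.log_pos hc
  have hratio : 0 < M / u := div_pos (hu.trans_le huM) hu
  have hlogb : 0 ≤ Real.logb c (M / u) := Real.logb_nonneg hc ((one_le_div hu).2 huM)
  have hsqrt : √(M / u) * √u = √M := by rw [← Real.sqrt_mul hratio.le, div_mul_cancel₀ _ hu.ne']
  have hlog : Real.log (M / u) ≤ 2 * √(M / u) := by
    have := Real.log_le_self (Real.sqrt_nonneg (M / u))
    rw [Real.log_sqrt hratio.le] at this
    linarith
  refine ⟨⌊Real.logb c (M / u)⌋₊ + 1, ?_, ?_⟩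
  · rw [← div_lt_iff₀ hu, ← Real.rpow_natCast, ← Real.logb_lt_iff_lt_rpow hc hratio]
    exact_mod_cast Nat.lt_floor_add_one _
  · calc ((⌊Real.logb c (M / u)⌋₊ + 1 : ℕ) : ℝ) * √u
        ≤ (Real.log (M / u) / Real.log c + 1) * √u := by
          push_cast
          gcongr
          exact Nat.floor_le hlogb
      _ ≤ (2 * √(M / u) / Real.log c + 1) * √u := by gcongr
      _ = √u + 2 / Real.log c * √M := by rw [← hsqrt]; ring
      _ ≤ (1 + 2 / Real.log c) * √M := by
          rw [one_add_mul]
          gcongr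

/-- The partial matchings compatible with `R`, bundled in order to carry a pseudometric. -/
structure Matching {X Y : Type*} [MeasurableSpace X] [MeasurableSpace Y] (R : SetRel X Y) where
  dom : Set X
  toFun : X → Y
  isMatching : IsMatching R dom toFun

namespace Matching

open Filter Topology
open scoped symmDiff NNReal

variable {X Y : Type*} [MeasurableSpace X] [MeasurableSpace Y] {R : SetRel X Y}

/-- The set where two matchings differ. The values of the underlying functions are compared off
the domains as well, which makes this a measurable set satisfying the triangle inequality. -/
def disagreement (M N : Matching R) : Set X := M.dom ∆ N.dom ∪ {x | M.toFun x ≠ N.toFun x}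

theorem disagreement_comm (M N : Matching R) : M.disagreement N = N.disagreement M := by
  simp only [disagreement, symmDiff_comm, ne_comm]

theorem disagreement_subset_union (L M N : Matching R) :
    L.disagreement N ⊆ L.disagreement M ∪ M.disagreement N := by
  intro x
  simp only [disagreement, mem_union, mem_symmDiff, mem_ofPred_eq]
  grind

theorem notMem_disagreement {M N : Matching R} {x : X} :
    x ∉ M.disagreement N ↔ (x ∈ M.dom ↔ x ∈ N.dom) ∧ M.toFun x = N.toFun x := by
  simp only [disagreement, mem_union, mem_symmDiff, mem_ofPred_eq]
  grind

theorem measurableSet_disagreement [MeasurableEq Y] (M N : Matching R) :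
    MeasurableSet (M.disagreement N) :=
  (M.isMatching.measurableSet.symmDiff N.isMatching.measurableSet).union
    (measurableSet_eq_fun M.isMatching.measurable N.isMatching.measurable).compl

/-- The points where consecutive terms of a sequence of matchings still differ from the `n`-th term
on; off this set, the sequence is constant from there on. -/
def tailDisagreement (M : ℕ → Matching R) (n : ℕ) : Set X :=
  ⋃ k, (M (k + n)).disagreement (M (k + n + 1))

theorem measurableSet_tailDisagreement [MeasurableEq Y] (M : ℕ → Matching R) (n : ℕ) :
    MeasurableSet (tailDisagreement M n) :=
  .iUnion fun _ => measurableSet_disagreement _ _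

theorem antitone_tailDisagreement (M : ℕ → Matching R) : Antitone (tailDisagreement M) :=
  antitone_nat_of_succ_le fun n => iUnion_subset fun k => by
    rw [← add_assoc, add_right_comm k n 1]
    exact subset_iUnion (fun k => (M (k + n)).disagreement (M (k + n + 1))) (k + 1)

theorem notMem_disagreement_of_notMem_tailDisagreement {M : ℕ → Matching R} {m n : ℕ} (hmn : m ≤ n)
    {x : X} (hx : x ∉ tailDisagreement M m) : x ∉ (M m).disagreement (M n) := by
  induction n, hmn using Nat.le_induction with
  | base => exact notMem_disagreement.2 ⟨Iff.rfl, rfl⟩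
  | succ n hmn ih =>
    have hstep : x ∉ (M n).disagreement (M (n + 1)) := fun h =>
      hx (antitone_tailDisagreement M hmn (mem_iUnion.2 ⟨0, by rwa [zero_add]⟩))
    exact fun h => (disagreement_subset_union _ (M n) _ h).elim ih hstep

theorem exists_disagreement_subset_tailDisagreement [MeasurableEq Y] (M : ℕ → Matching R) :
    ∃ L : Matching R, ∀ n, (M n).disagreement L ⊆ tailDisagreement M n := by
  have hstable {m n : ℕ} (hmn : m ≤ n) {x : X} (hx : x ∉ tailDisagreement M m) :=
    notMem_disagreement.1 (notMem_disagreement_of_notMem_tailDisagreement hmn hx)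
  obtain ⟨f, hf, hfM⟩ := exists_measurable_piecewise (fun n => (tailDisagreement M n)ᶜ)
    (fun n => (measurableSet_tailDisagreement M n).compl)
    (fun n => (M n).toFun) (fun n => (M n).isMatching.measurable) fun m n _ x hx => by
      rcases le_total m n with hmn | hmn
      exacts [(hstable hmn hx.1).2, (hstable hmn hx.2).2.symm]
  have hcommon {m n : ℕ} {x : X} (hm : x ∈ (M m).dom \ tailDisagreement M m) (hmn : m ≤ n) :
      x ∈ (M n).dom ∧ f x = (M n).toFun x :=
    ⟨(hstable hmn hm.2).1.1 hm.1, hfM n fun hn => hm.2 (antitone_tailDisagreement M hmn hn)⟩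
  have hL : IsMatching R (⋃ n, (M n).dom \ tailDisagreement M n) f := by
    refine ⟨.iUnion fun n => (M n).isMatching.measurableSet.diff
      (measurableSet_tailDisagreement M n), hf, ?_, ?_⟩
    · intro x hx y hy hxy
      obtain ⟨m, hm⟩ := mem_iUnion.1 hx
      obtain ⟨n, hn⟩ := mem_iUnion.1 hy
      obtain ⟨hx, hfx⟩ := hcommon hm (le_max_left m n)
      obtain ⟨hy, hfy⟩ := hcommon hn (le_max_right m n)
      exact (M (max m n)).isMatching.injOn hx hy (hfx ▸ hfy ▸ hxy)
    · intro x hx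
      obtain ⟨n, hn⟩ := mem_iUnion.1 hx
      exact hfM n hn.2 ▸ (M n).isMatching.mem_rel x hn.1
  refine ⟨⟨_, f, hL⟩, fun n x => not_imp_not.1 fun hx => notMem_disagreement.2 ⟨⟨fun hxn => ?_,
    fun hxL => ?_⟩, (hfM n hx).symm⟩⟩
  · exact mem_iUnion.2 ⟨n, hxn, hx⟩
  · obtain ⟨m, hm⟩ := mem_iUnion.1 hxL
    exact (hstable (le_max_right m n) hx).1.2 (hcommon hm (le_max_left m n)).1

section Metric

variable (R) (μ : Measure X) [IsFiniteMeasure μ]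

/-- The distance of two matchings is the measure of the set where they differ. -/
noncomputable abbrev pseudoMetricSpace : PseudoMetricSpace (Matching R) where
  dist M N := μ.real (M.disagreement N)
  dist_self M := by simp [disagreement]
  dist_comm M N := by rw [disagreement_comm]
  dist_triangle L M N :=
    (measureReal_mono (disagreement_subset_union L M N)).trans (measureReal_union_le _ _)

theorem completeSpace [MeasurableEq Y] :
    @CompleteSpace _ (pseudoMetricSpace R μ).toUniformSpace := by
  let _ := pseudoMetricSpace R μ
  refine Metric.complete_of_convergent_controlled_sequences (fun n => (1 / 2) ^ n)
    (fun n => by positivity) fun M hM => ?_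
  obtain ⟨L, hL⟩ := exists_disagreement_subset_tailDisagreement M
  refine ⟨L, tendsto_iff_dist_tendsto_zero.2 ?_⟩
  let d (n : ℕ) : ℝ≥0∞ := μ ((M n).disagreement (M (n + 1)))
  have hd : ∑' n, d n ≠ ∞ := by
    have hle (n : ℕ) : d n ≤ ENNReal.ofReal ((1 / 2) ^ n) := by
      exact ENNReal.le_ofReal_iff_toReal_le (measure_ne_top μ _) (by positivity) |>.2
        (hM n n (n + 1) le_rfl n.le_succ).le
    refine ne_top_of_le_ne_top ?_ (ENNReal.tsum_le_tsum hle)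
    exact summable_geometric_two.tsum_ofReal_ne_top
  have htail : Tendsto (fun n => μ ((M n).disagreement L)) atTop (𝓝 0) :=
    tendsto_of_tendsto_of_tendsto_of_le_of_le tendsto_const_nhds
      (ENNReal.tendsto_sum_nat_add d hd) (fun _ => zero_le)
      fun n => (measure_mono (hL n)).trans (measure_iUnion_le _)
  exact (ENNReal.tendsto_toReal ENNReal.zero_ne_top).comp htail

theorem continuous_measureReal_compl_dom :
    @Continuous _ _ (pseudoMetricSpace R μ).toUniformSpace.toTopologicalSpace _
      fun M : Matching R => μ.real M.domᶜ := by
  let _ := pseudoMetricSpace R μ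
  refine (LipschitzWith.of_le_add fun M N => ?_).continuous
  refine (measureReal_mono fun x hx => ?_).trans (measureReal_union_le N.domᶜ (M.disagreement N))
  by_cases hxN : x ∈ N.dom
  exacts [.inr (.inl (.inr ⟨hxN, hx⟩)), .inl hxN]

end Metric

section Expansive

variable {μ : Measure X} [IsFiniteMeasure μ] {ν : Measure Y}
  [StandardBorelSpace X] [MeasurableSpace.CountablySeparated Y]

theorem exists_disagreement_le_sub_sqrt (hR : HasCountableMatchingCover R)
    (hpres : MeasurePreservingRel R μ ν) {c : ℝ≥0} (hc : 1 < c)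
    (hexp : ExpansiveRel R μ ν c) (M : Matching R)
    (hM : μ.real M.domᶜ ≠ 0) :
    ∃ M' : Matching R, μ.real M'.domᶜ < μ.real M.domᶜ ∧ μ.real (M.disagreement M') ≤
      2 * ((1 + 2 / Real.log c) * √(μ.real univ)) * (√(μ.real M.domᶜ) - √(μ.real M'.domᶜ)) := by
  obtain ⟨S, f, hf⟩ := M
  change μ.real Sᶜ ≠ 0 at hM
  obtain ⟨N, hNlt, hNle⟩ := exists_lt_pow_mul_and_mul_sqrt_le hc
    (measureReal_nonneg.lt_of_ne' hM) (measureReal_mono (subset_univ Sᶜ))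
  obtain ⟨n, hnN, hn⟩ := hf.exists_measure_image_alternatingReach_sdiff_ne_zero hR hpres hexp
    (N := N) (by
      rw [← ENNReal.toReal_lt_toReal (measure_ne_top μ _) (by finiteness)]
      simpa [measureReal_def] using hNlt)
  obtain ⟨S', f', hf', hSS', hδ, hcost⟩ := hf.exists_augment hR hpres n hn
  have hgain : μ.real (S' \ S) = μ.real Sᶜ - μ.real S'ᶜ := by
    rw [measureReal_compl hf.measurableSet, measureReal_compl hf'.measurableSet,
      measureReal_sdiff hSS' hf.measurableSet]
    ring
  have hlt : μ.real S'ᶜ < μ.real Sᶜ :=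
    sub_pos.1 (hgain ▸ measureReal_nonneg.lt_of_ne' ((measureReal_ne_zero_iff).2 hδ))
  have hsqrt : 0 ≤ √(μ.real Sᶜ) - √(μ.real S'ᶜ) := sub_nonneg.2 (Real.sqrt_le_sqrt hlt.le)
  refine ⟨⟨S', f', hf'⟩, hlt, ?_⟩
  calc μ.real (disagreement ⟨S, f, hf⟩ ⟨S', f', hf'⟩)
      ≤ ((n : ℝ≥0∞) + 1).toReal * μ.real (S' \ S) := by
        rw [disagreement, symmDiff_of_le hSS', measureReal_def, measureReal_def,
          ← ENNReal.toReal_mul]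
        exact ENNReal.toReal_mono (by finiteness) hcost
    _ ≤ N * (μ.real Sᶜ - μ.real S'ᶜ) := by
        rw [← hgain]
        gcongr
        exact_mod_cast hnN
    _ ≤ N * (2 * √(μ.real Sᶜ) * (√(μ.real Sᶜ) - √(μ.real S'ᶜ))) := by
        gcongr
        nlinarith [Real.sq_sqrt (measureReal_nonneg (μ := μ) (s := Sᶜ)),
          Real.sq_sqrt (measureReal_nonneg (μ := μ) (s := S'ᶜ))]
    _ = 2 * (N * √(μ.real Sᶜ)) * (√(μ.real Sᶜ) - √(μ.real S'ᶜ)) := by ring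
    _ ≤ 2 * ((1 + 2 / Real.log c) * √(μ.real univ)) * (√(μ.real Sᶜ) - √(μ.real S'ᶜ)) :=
        mul_le_mul_of_nonneg_right (mul_le_mul_of_nonneg_left hNle zero_le_two) hsqrt

theorem exists_measure_compl_dom_eq_zero [MeasurableEq Y] (hR : HasCountableMatchingCover R)
    (hpres : MeasurePreservingRel R μ ν) {c : ℝ≥0} (hc : 1 < c)
    (hexp : ExpansiveRel R μ ν c) :
    ∃ M : Matching R, μ M.domᶜ = 0 := by
  let _ := pseudoMetricSpace R μ
  have := completeSpace R μ
  have : Nonempty (Matching R) := by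
    obtain ⟨D, h, hDh, -⟩ := hR
    exact ⟨⟨D 0, h 0, hDh 0⟩⟩
  by_contra! h0
  let K : ℝ := 2 * ((1 + 2 / Real.log c) * √(μ.real univ))
  have hK : 0 < K := by
    have hlog : 0 < Real.log c := Real.log_pos hc
    obtain ⟨M⟩ := ‹Nonempty (Matching R)›
    have huniv : 0 < μ.real univ := (measureReal_nonneg.lt_of_ne'
      ((measureReal_ne_zero_iff).2 (h0 M))).trans_le (measureReal_mono (subset_univ _))
    positivity
  obtain ⟨M, hM⟩ := exists_forall_eq_of_dist_le_sub
    (ψ := fun M : Matching R => K * √(μ.real M.domᶜ))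
    ((continuous_measureReal_compl_dom R μ).sqrt.const_mul K).lowerSemicontinuous
    ⟨0, forall_mem_range.2 fun M => by positivity⟩
  obtain ⟨M', hlt, hle⟩ := exists_disagreement_le_sub_sqrt hR hpres hc hexp M
    ((measureReal_ne_zero_iff).2 (h0 M))
  have heq := mul_left_cancel₀ hK.ne' (hM M' (hle.trans_eq (mul_sub _ _ _)))
  exact hlt.ne ((Real.sqrt_inj measureReal_nonneg measureReal_nonneg).1 heq)

end Expansive

end Matching

theorem stmt0_general {X Y : Type*} [MeasurableSpace X] [StandardBorelSpace X]
    [MeasurableSpace Y] [StandardBorelSpace Y]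
    (μ : Measure X) [IsFiniteMeasure μ] [NeZero μ] (ν : Measure Y)
    (R : Set (X × Y)) (hR : MeasurableSet R)
    (hlocX : ∀ x : X, {y | (x, y) ∈ R}.Finite)
    (hlocY : ∀ y : Y, {x | (x, y) ∈ R}.Finite)
    (hpres : MeasurePreservingRel R μ ν)
    (hexp : ∃ c : ℝ≥0∞, 1 < c ∧ ∀ A : Set X, MeasurableSet A →
      c * μ A ≤ ν {y | ∃ x ∈ A, (x, y) ∈ R}) :
    ∃ X' : Set X, MeasurableSet X' ∧ μ X'ᶜ = 0 ∧
      ∃ f : X → Y, Measurable f ∧ Set.InjOn f X' ∧ ∀ x ∈ X', (x, f x) ∈ R := by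
  obtain ⟨c₀, hc₀, hexp⟩ : ∃ c, 1 < c ∧ ExpansiveRel R μ ν c := hexp
  have : Nonempty Y := hexp.nonempty (zero_lt_one.trans hc₀).ne'
  obtain ⟨c, hc, hcc₀⟩ := ENNReal.lt_iff_exists_nnreal_btwn.1 hc₀
  obtain ⟨R', hR'R, hR', hae⟩ := exists_subset_hasCountableMatchingCover μ hR hlocX hlocY
  obtain ⟨M, hM⟩ := Matching.exists_measure_compl_dom_eq_zero hR' (hpres.mono hR'R)
    (ENNReal.one_lt_coe_iff.1 hc) ((hexp.mono_const hcc₀.le).mono_ae hae)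
  exact ⟨M.dom, M.isMatching.measurableSet, hM, M.toFun, M.isMatching.measurable,
    M.isMatching.injOn, fun x hx => hR'R (M.isMatching.mem_rel x hx)⟩

/-- **Lyons–Nazarov measurable matching.** If `X`, `Y` are standard Borel spaces, `μ` a Borel
probability measure on `X`, `ν` a Borel measure on `Y`, and `R ⊆ X × Y` is Borel, locally
finite, `(μ,ν)`-preserving and expansive, then there are a `μ`-conull Borel set `X' ⊆ X` and a
Borel injection `f : X' → Y` compatible with `R`. -/
theorem stmt0 {X Y : Type*} [MeasurableSpace X] [StandardBorelSpace X]
    [MeasurableSpace Y] [StandardBorelSpace Y]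
    (μ : Measure X) [IsProbabilityMeasure μ] (ν : Measure Y)
    (R : Set (X × Y)) (hR : MeasurableSet R)
    (hlocX : ∀ x : X, {y | (x, y) ∈ R}.Finite)
    (hlocY : ∀ y : Y, {x | (x, y) ∈ R}.Finite)
    (hpres : MeasurePreservingRel R μ ν)
    (hexp : ∃ c : ℝ≥0∞, 1 < c ∧ ∀ A : Set X, MeasurableSet A →
      c * μ A ≤ ν {y | ∃ x ∈ A, (x, y) ∈ R}) :
    ∃ X' : Set X, MeasurableSet X' ∧ μ X'ᶜ = 0 ∧
      ∃ f : X → Y, Measurable f ∧ Set.InjOn f X' ∧ ∀ x ∈ X', (x, f x) ∈ R :=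
  stmt0_general μ ν R hR hlocX hlocY hpres hexp
end

section
/- Let X and Y be standard Borel spaces, μ a Borel probability measure on X, ν a Borel measure on Y, and R ⊆ X × Y a Borel, locally finite, (μ,ν)-preserving set. Suppose g is a Borel partial injection from X to Y compatible with R, and let n ≥ 1. Then there is a Borel partial injection g' from X to Y compatible with R such that: dom(g') ⊇ dom(g); g' admits no g'-augmenting paths of length less than n; and μ({x ∈ dom(g') : x ∉ dom(g) or g'(x) ≠ g(x)}) ≤ n·μ(X ∖ dom(g)). -/
open MeasureTheory Set
open scoped ENNReal

/-- A `g`-augmenting path of length `n` for a partial injection `g` with domain `D`,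
relative to `R ⊆ X × Y`: a sequence `(x_0, y_0, …, x_n, y_n)` such that `x_0 ∉ dom(g)`,
the `y_i` are pairwise distinct, `(x_i, y_i) ∈ R` for all `i`, `y_i = g(x_{i+1})` for all
`i < n`, and `y_n` is not in the image of `g`. -/
def IsAugPath {X Y : Type*} (R : Set (X × Y)) (D : Set X) (g : X → Y) (n : ℕ)
    (x : Fin (n + 1) → X) (y : Fin (n + 1) → Y) : Prop :=
  x 0 ∉ D ∧ Function.Injective y ∧ (∀ i, (x i, y i) ∈ R) ∧
    (∀ i : Fin n, x i.succ ∈ D ∧ g (x i.succ) = y i.castSucc) ∧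
    y (Fin.last n) ∉ g '' D

/-! The matching is improved in phases, as in the Hopcroft–Karp algorithm. Suppose all augmenting
paths have length at least `n`. Those of length exactly `n` are the vertices of a locally finite
Borel graph, two paths being adjacent when they share a vertex, so there is a Borel maximal
family of pairwise disjoint ones. Flipping along the family leaves no augmenting path of length
at most `n`: the dual potential, which bounds the length of augmenting paths from below, can be
raised by one at all points not tightly reachable without touching the family. Since `R` is
measure preserving, the `n + 1` layers of the family all have the measure of the newly covered
set, so the phase alters the matching on a set of at most `n + 1` times that measure; summing
over the phases gives the bound.

Borel maximal independent sets of locally finite Borel graphs come from a greedy algorithm, which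
stays within the Borel sets because Borel images under maps with finite fibers are Borel. That in
turn is a consequence of Novikov's separation theorem for sequences of analytic sets. -/

section NovikovSeparation

variable {ι Z : Type*} [MeasurableSpace Z]

/-- Joint separability of a family of sets, the analogue of `MeasurablySeparable` for more than
two sets: the sets can be enlarged to measurable sets with empty intersection. -/
def JointlySeparable (A : ι → Set Z) : Prop :=
  ∃ B : ι → Set Z, (∀ n, MeasurableSet (B n)) ∧ (∀ n, A n ⊆ B n) ∧ ⋂ n, B n = ∅

theorem JointlySeparable.of_measurablySeparable {A : ι → Set Z} {k l : ι}
    (h : MeasurablySeparable (A k) (A l)) : JointlySeparable A := by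
  obtain ⟨u, hku, hlu, hu⟩ := h
  refine ⟨fun n => {z | (n = k → z ∈ u) ∧ (n = l → z ∉ u)}, fun n => ?_, fun n z hz => ?_, ?_⟩
  · exact measurableSet_setOfPred.2 (by fun_prop)
  · exact ⟨fun hn => hku (hn ▸ hz), fun hn => disjoint_left.1 hlu (hn ▸ hz)⟩
  · exact eq_empty_of_forall_notMem fun z hz =>
      (mem_iInter.1 hz l).2 rfl ((mem_iInter.1 hz k).1 rfl)

theorem JointlySeparable.of_subset_iUnion {κ : Type*} [Countable κ] {A : ι → Set Z} (i : ι)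
    {A' : κ → ι → Set Z} (hne : ∀ m, ∀ n ≠ i, A n ⊆ A' m n) (hi : A i ⊆ ⋃ m, A' m i)
    (h : ∀ m, JointlySeparable (A' m)) : JointlySeparable A := by
  choose B hB hAB hB0 using h
  refine ⟨fun n => {z | (n = i → ∃ m, z ∈ B m n) ∧ (n ≠ i → ∀ m, z ∈ B m n)}, fun n => ?_,
    fun n z hz => ⟨?_, fun hn m => hAB m n (hne m n hn hz)⟩, ?_⟩
  · exact measurableSet_setOfPred.2 (by fun_prop (disch := exact hB _ _))
  · rintro rfl
    exact (mem_iUnion.1 (hi hz)).imp fun m hm => hAB m n hm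
  · refine eq_empty_of_forall_notMem fun z hz => ?_
    obtain ⟨m, hm⟩ := (mem_iInter.1 hz i).1 rfl
    have hzB : z ∈ ⋂ n, B m n := mem_iInter.2 fun n => by
      by_cases hn : n = i
      · exact hn ▸ hm
      · exact (mem_iInter.1 hz n).2 hn m
    exact notMem_empty z (hB0 m ▸ hzB)

theorem exists_forall_cylinder {P : Set (ℕ → ℕ) → Prop} (h0 : P univ)
    (hstep : ∀ w t, P (PiNat.cylinder w t) →
      ∃ m, P (PiNat.cylinder (Function.update w t m) (t + 1))) :
    ∃ w, ∀ t, P (PiNat.cylinder w t) := by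
  choose! e he using hstep
  let s : ℕ → ℕ → ℕ := Nat.rec (fun _ => 0) fun t w => Function.update w t (e w t)
  have hs : ∀ t, P (PiNat.cylinder (s t) t) := fun t => by
    induction t with
    | zero => simpa using h0
    | succ t ih => exact he _ _ ih
  have hstable : ∀ i t, i < t → s t i = s (i + 1) i := fun i t hit => by
    induction t, hit using Nat.le_induction with
    | base => rfl
    | succ t hit ih => exact (Function.update_of_ne (by omega) _ _).trans ih
  refine ⟨fun i => s (i + 1) i, fun t => ?_⟩
  have hmem : s t ∈ PiNat.cylinder (fun i => s (i + 1) i) t := fun i => hstable i t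
  exact PiNat.mem_cylinder_iff_eq.1 hmem ▸ hs t

theorem exists_image_cylinder_subset {W : Type*} [TopologicalSpace W] {h : (ℕ → ℕ) → W}
    (hh : Continuous h) {w : ℕ → ℕ} {U : Set W} (hU : IsOpen U) (hw : h w ∈ U) :
    ∃ t, h '' PiNat.cylinder w t ⊆ U := by
  obtain ⟨_, ⟨v, t, rfl⟩, hwv, hsub⟩ :=
    (PiNat.isTopologicalBasis_cylinders fun _ => ℕ).exists_subset_of_mem_open
      (show w ∈ h ⁻¹' U from hw) (hU.preimage hh)
  exact ⟨t, image_subset_iff.2 (PiNat.mem_cylinder_iff_eq.1 hwv ▸ hsub)⟩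

theorem image_cylinder_subset_image_cylinder_update {W : Type*} {h : (ℕ → ℕ) → W} {t m : ℕ}
    (hh : ∀ x, h (Function.update x t m) = h x) (w : ℕ → ℕ) :
    h '' PiNat.cylinder w t ⊆ h '' PiNat.cylinder (Function.update w t m) (t + 1) := by
  rintro _ ⟨x, hx, rfl⟩
  refine ⟨Function.update x t m, fun i hi => ?_, hh x⟩
  rcases Nat.lt_succ_iff_lt_or_eq.1 hi with hit | rfl
  · simpa [hit.ne] using hx i hit
  · simp

theorem jointlySeparable_image_cylinder [TopologicalSpace Z] [T2Space Z] [OpensMeasurableSpace Z]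
    {h : ι → (ℕ → ℕ) → Z} (hh : ∀ n, Continuous (h n)) {w : ℕ → ℕ} {k l : ι}
    (hkl : h k w ≠ h l w) : ∃ t, JointlySeparable fun n => h n '' PiNat.cylinder w t := by
  obtain ⟨U, V, hU, hV, hkU, hlV, hUV⟩ := t2_separation hkl
  obtain ⟨t₁, ht₁⟩ := exists_image_cylinder_subset (hh k) hU hkU
  obtain ⟨t₂, ht₂⟩ := exists_image_cylinder_subset (hh l) hV hlV
  refine ⟨max t₁ t₂, .of_measurablySeparable (k := k) (l := l) ⟨U, ?_, ?_, hU.measurableSet⟩⟩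
  · exact (image_mono (PiNat.cylinder_anti w (le_max_left _ _))).trans ht₁
  · exact hUV.symm.mono_left
      ((image_mono (PiNat.cylinder_anti w (le_max_right _ _))).trans ht₂)

-- The sets are parametrized by disjoint blocks of coordinates of one common sequence.
theorem exists_continuous_range_eq_of_analyticSet {W : Type*} [TopologicalSpace W] {A : ℕ → Set W}
    (hA : ∀ n, AnalyticSet (A n)) (hne : ∀ n, (A n).Nonempty) :
    ∃ h : ℕ → (ℕ → ℕ) → W, (∀ n, Continuous (h n)) ∧ (∀ n, range (h n) = A n) ∧
      ∀ n t m, n ≠ t.unpair.1 → ∀ w, h n (Function.update w t m) = h n w := by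
  have hrange : ∀ n, ∃ f : (ℕ → ℕ) → W, Continuous f ∧ range f = A n := fun n => by
    have hAn := hA n
    rw [AnalyticSet] at hAn
    exact hAn.resolve_left (hne n).ne_empty
  choose f hfc hfA using hrange
  refine ⟨fun n w => f n fun i => w (Nat.pair n i), fun n => (hfc n).comp (by fun_prop),
    fun n => ?_, fun n t m hn w => congrArg (f n) (funext fun i => Function.update_of_ne ?_ _ _)⟩
  · rw [← hfA n]
    refine (range_comp_subset_range _ (f n)).antisymm (range_subset_iff.2 fun x => ?_)
    exact ⟨fun j => x j.unpair.2, by simp⟩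
  · rintro rfl
    simp at hn

/-- **Novikov separation theorem.** -/
theorem jointlySeparable_of_analyticSet [TopologicalSpace Z] [T2Space Z] [OpensMeasurableSpace Z]
    {A : ℕ → Set Z} (hA : ∀ n, AnalyticSet (A n)) (h0 : ⋂ n, A n = ∅) : JointlySeparable A := by
  by_cases! hemp : ∃ i, A i = ∅
  · obtain ⟨i, hi⟩ := hemp
    exact .of_measurablySeparable (k := i) (l := i) ⟨∅, hi.subset, disjoint_empty _, .empty⟩
  obtain ⟨h, hh, hhA, hupdate⟩ := exists_continuous_range_eq_of_analyticSet hA hemp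
  by_contra hsep
  obtain ⟨w, hw⟩ := exists_forall_cylinder
    (P := fun S => ¬ JointlySeparable fun n => h n '' S)
    (by simpa only [image_univ, hhA] using hsep) <| by
    intro w t hwt
    by_contra! hall
    refine hwt (.of_subset_iUnion t.unpair.1 (fun m n hn => ?_) ?_ hall)
    · exact image_cylinder_subset_image_cylinder_update (hupdate n t m hn) w
    · rw [← image_iUnion, PiNat.iUnion_cylinder_update (E := fun _ => ℕ)]
  obtain ⟨n, hn⟩ : ∃ n, h n w ≠ h 0 w := by
    by_contra! heq
    have hmem : h 0 w ∈ ⋂ n, A n := mem_iInter.2 fun n =>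
      hhA n ▸ heq n ▸ mem_range_self w
    exact notMem_empty _ (h0 ▸ hmem)
  obtain ⟨t, ht⟩ := jointlySeparable_image_cylinder hh hn
  exact hw t ht

end NovikovSeparation

section FiniteFibers

open MeasurableSpace (CountablySeparated)

theorem exists_seq_measurableSet_disjoint_finite (Z : Type*) [MeasurableSpace Z]
    [CountablySeparated Z] :
    ∃ U : ℕ → Set Z, (∀ n, MeasurableSet (U n)) ∧
      ∀ (z : Z) (F : Set Z), F.Finite → z ∉ F → ∃ n, z ∈ U n ∧ Disjoint (U n) F := by
  obtain ⟨_, _, _, _⟩ := exists_opensMeasurableSpace_of_countablySeparated Z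
  obtain ⟨U, hU⟩ := TopologicalSpace.exists_seq_basis Z
  refine ⟨U, fun n => (hU.isOpen (mem_range_self n)).measurableSet, fun z F hF hz => ?_⟩
  obtain ⟨_, ⟨n, rfl⟩, hzU, hUF⟩ := hU.exists_subset_of_mem_open
    (show z ∈ Fᶜ from hz) hF.isClosed.isOpen_compl
  exact ⟨n, hzU, disjoint_left.2 fun y hy => hUF hy⟩

variable {Z X : Type*} [MeasurableSpace Z] [StandardBorelSpace Z] [MeasurableSpace X]
  [CountablySeparated X]

/-- Finite case of the **Lusin–Novikov theorem**. -/
theorem exists_iUnion_eq_injOn_of_finite_fibers {S : Set Z} (hS : MeasurableSet S) {f : Z → X}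
    (hf : Measurable f) (hfin : ∀ z ∈ S, {z' ∈ S | f z' = f z}.Finite) :
    ∃ C : ℕ → Set Z, (∀ n, MeasurableSet (C n)) ∧ ⋃ n, C n = S ∧ ∀ n, InjOn f (C n) := by
  obtain ⟨U, hU, hUsep⟩ := exists_seq_measurableSet_disjoint_finite Z
  -- `A n` consists of the points of `S` that `U n` fails to isolate within their fiber.
  let A : ℕ → Set Z := fun n =>
    Prod.fst '' {r : Z × Z | r.1 ∈ S ∧ r.2 ∈ S ∧ f r.2 = f r.1 ∧
      (r.1 ∈ U n → r.2 ∈ U n ∧ r.2 ≠ r.1)}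
  have hAmem : ∀ {n z z'}, z ∈ S → z' ∈ S → f z' = f z → (z ∈ U n → z' ∈ U n ∧ z' ≠ z) → z ∈ A n :=
    fun {n z z'} hz hz' hzz' h => ⟨(z, z'), ⟨hz, hz', hzz', h⟩, rfl⟩
  let := upgradeStandardBorel Z
  obtain ⟨_, _, _, _⟩ := exists_opensMeasurableSpace_of_countablySeparated X
  have hA : ∀ n, AnalyticSet (A n) := fun n => by
    refine MeasurableSet.analyticSet_image (measurableSet_setOfPred.2 ?_) measurable_fst
    have hfiber : Measurable fun r : Z × Z => f r.2 = f r.1 :=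
      measurableSet_setOfPred.1 (measurableSet_eq_fun (by fun_prop) (by fun_prop))
    have hdiag : Measurable fun r : Z × Z => r.2 = r.1 :=
      measurableSet_setOfPred.1 (measurableSet_eq_fun (by fun_prop) (by fun_prop))
    exact .and (by fun_prop) <| .and (by fun_prop) <| .and hfiber <|
      .imp (by fun_prop (disch := exact hU n)) <| .and (by fun_prop (disch := exact hU n)) hdiag.not
  have hA0 : ⋂ n, A n = ∅ := by
    refine eq_empty_of_forall_notMem fun z hz => ?_
    have hzS : z ∈ S := by
      obtain ⟨_, ⟨hzS, -⟩, rfl⟩ := mem_iInter.1 hz 0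
      exact hzS
    obtain ⟨n, hzn, hn⟩ := hUsep z ({z' ∈ S | f z' = f z} \ {z})
      ((hfin z hzS).subset sdiff_subset) (by simp)
    obtain ⟨⟨_, z'⟩, ⟨-, hz', hzz', h⟩, rfl⟩ := mem_iInter.1 hz n
    exact disjoint_left.1 hn (h hzn).1 ⟨⟨hz', hzz'⟩, (h hzn).2⟩
  obtain ⟨B, hB, hAB, hB0⟩ := jointlySeparable_of_analyticSet hA hA0
  refine ⟨fun n => S \ B n, fun n => hS.diff (hB n), by rw [← sdiff_iInter, hB0, sdiff_empty], ?_⟩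
  rintro n z ⟨hz, hzB⟩ z' ⟨hz', hzB'⟩ hzz'
  by_contra hne
  have hzU' : z' ∈ U n := by
    by_contra hU
    exact hzB' (hAB n (hAmem hz' hz' rfl fun h => (hU h).elim))
  exact hzB (hAB n (hAmem hz hz' hzz'.symm fun _ => ⟨hzU', Ne.symm hne⟩))

theorem measurableSet_image_of_finite_fibers {S : Set Z} (hS : MeasurableSet S) {f : Z → X}
    (hf : Measurable f) (hfin : ∀ z ∈ S, {z' ∈ S | f z' = f z}.Finite) :
    MeasurableSet (f '' S) := by
  obtain ⟨C, hC, rfl, hCinj⟩ := exists_iUnion_eq_injOn_of_finite_fibers hS hf hfin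
  rw [image_iUnion]
  exact .iUnion fun n => (hC n).image_of_measurable_injOn hf (hCinj n)

end FiniteFibers

section LocallyFiniteBorelGraph

variable {Z : Type*} {G : SimpleGraph Z}

/-- The stages of the greedy algorithm that runs through the sets `C 0, C 1, …` and adds the
points having no neighbour among the points chosen before. -/
def greedyIndepSet (G : SimpleGraph Z) (C : ℕ → Set Z) : ℕ → Set Z
  | 0 => ∅
  | n + 1 => greedyIndepSet G C n ∪ {p ∈ C n | ∀ q ∈ greedyIndepSet G C n, ¬ G.Adj p q}

theorem monotone_greedyIndepSet (G : SimpleGraph Z) (C : ℕ → Set Z) :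
    Monotone (greedyIndepSet G C) :=
  monotone_nat_of_le_succ fun _ => subset_union_left

theorem isIndepSet_greedyIndepSet {C : ℕ → Set Z} (hC : ∀ n, G.IsIndepSet (C n)) (n : ℕ) :
    G.IsIndepSet (greedyIndepSet G C n) := by
  induction n with
  | zero => exact pairwise_empty _
  | succ n ih =>
    rintro p (hp | hp) q (hq | hq) hpq
    · exact ih hp hq hpq
    · exact fun h => hq.2 p hp h.symm
    · exact hp.2 q hq
    · exact hC n hp.1 hq.1 hpq

theorem isIndepSet_iUnion_greedyIndepSet {C : ℕ → Set Z} (hC : ∀ n, G.IsIndepSet (C n)) :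
    G.IsIndepSet (⋃ n, greedyIndepSet G C n) :=
  (pairwise_iUnion (monotone_greedyIndepSet G C).directed_le).2 (isIndepSet_greedyIndepSet hC)

theorem exists_adj_iUnion_greedyIndepSet {C : ℕ → Set Z} {p : Z} (hp : p ∈ ⋃ n, C n)
    (hpT : p ∉ ⋃ n, greedyIndepSet G C n) : ∃ q ∈ ⋃ n, greedyIndepSet G C n, G.Adj p q := by
  obtain ⟨n, hpn⟩ := mem_iUnion.1 hp
  by_contra! h
  exact hpT (mem_iUnion.2 ⟨n + 1, .inr ⟨hpn, fun q hq => h q (mem_iUnion.2 ⟨n, hq⟩)⟩⟩)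

variable [MeasurableSpace Z] [StandardBorelSpace Z]

theorem measurableSet_setOf_exists_adj (hG : MeasurableSet {r : Z × Z | G.Adj r.1 r.2})
    (hfin : ∀ p, (G.neighborSet p).Finite) {B : Set Z} (hB : MeasurableSet B) :
    MeasurableSet {p | ∃ q ∈ B, G.Adj p q} := by
  have himage : {p | ∃ q ∈ B, G.Adj p q} = Prod.fst '' {r : Z × Z | r.2 ∈ B ∧ G.Adj r.1 r.2} := by
    ext p
    simp
  rw [himage]
  refine measurableSet_image_of_finite_fibers ((measurable_snd hB).inter hG) measurable_fst
    fun r _ => ((hfin r.1).image (Prod.mk r.1)).subset ?_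
  rintro ⟨p, q⟩ ⟨⟨-, hpq⟩, rfl⟩
  exact mem_image_of_mem _ hpq

theorem exists_seq_measurableSet_isIndepSet (hG : MeasurableSet {r : Z × Z | G.Adj r.1 r.2})
    (hfin : ∀ p, (G.neighborSet p).Finite) :
    ∃ C : ℕ → Set Z, (∀ n, MeasurableSet (C n)) ∧ (∀ n, G.IsIndepSet (C n)) ∧ ⋃ n, C n = univ := by
  obtain ⟨U, hU, hUsep⟩ := exists_seq_measurableSet_disjoint_finite Z
  refine ⟨fun n => U n \ {p | ∃ q ∈ U n, G.Adj p q}, fun n =>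
    (hU n).diff (measurableSet_setOf_exists_adj hG hfin (hU n)), fun n p hp q hq _ hpq =>
    hp.2 ⟨q, hq.1, hpq⟩, eq_univ_of_forall fun p => ?_⟩
  obtain ⟨n, hpn, hn⟩ := hUsep p (G.neighborSet p) (hfin p) G.irrefl
  exact mem_iUnion.2 ⟨n, hpn, fun ⟨q, hq, hpq⟩ => disjoint_left.1 hn hq hpq⟩

theorem measurableSet_greedyIndepSet (hG : MeasurableSet {r : Z × Z | G.Adj r.1 r.2})
    (hfin : ∀ p, (G.neighborSet p).Finite) {C : ℕ → Set Z} (hC : ∀ n, MeasurableSet (C n)) (n : ℕ) :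
    MeasurableSet (greedyIndepSet G C n) := by
  induction n with
  | zero => exact .empty
  | succ n ih =>
    convert ih.union ((hC n).diff (measurableSet_setOf_exists_adj hG hfin ih)) using 1
    ext p
    simp [greedyIndepSet]

theorem exists_measurableSet_maximal_isIndepSet (hG : MeasurableSet {r : Z × Z | G.Adj r.1 r.2})
    (hfin : ∀ p, (G.neighborSet p).Finite) :
    ∃ T, MeasurableSet T ∧ G.IsIndepSet T ∧ ∀ p ∉ T, ∃ q ∈ T, G.Adj p q := by
  obtain ⟨C, hC, hCind, hCuniv⟩ := exists_seq_measurableSet_isIndepSet hG hfin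
  exact ⟨_, .iUnion (measurableSet_greedyIndepSet hG hfin hC),
    isIndepSet_iUnion_greedyIndepSet hCind,
    fun p hp => exists_adj_iUnion_greedyIndepSet (hCuniv ▸ mem_univ p) hp⟩

end LocallyFiniteBorelGraph

section AugmentingPaths

open Function

variable {X Y ι : Type*} {R : Set (X × Y)} {D : Set X} {g : X → Y} {n m : ℕ} {φ : X → ℕ}

theorem IsAugPath.injective_fst {x : Fin (n + 1) → X} {y : Fin (n + 1) → Y}
    (h : IsAugPath R D g n x y) : Injective x := by
  obtain ⟨hx0, hy, -, hstep, -⟩ := h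
  intro i j hij
  cases i using Fin.cases <;> cases j using Fin.cases
  · rfl
  · exact (hx0 (hij ▸ (hstep _).1)).elim
  · exact (hx0 (hij ▸ (hstep _).1)).elim
  · rw [Fin.castSucc_injective _ <| hy <| (hstep _).2.symm.trans <|
      (congrArg g hij).trans (hstep _).2]

/-- A dual certificate that there are no augmenting paths of length less than `n`: a potential
that vanishes off the domain `D` of the matching, grows by at most one along every alternating
step, and is at least `n` at every point from which the matching can be left. -/
structure IsAugPotential (R : Set (X × Y)) (D : Set X) (g : X → Y) (n : ℕ) (φ : X → ℕ) : Prop where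
  eq_zero : ∀ x ∉ D, φ x = 0
  le_succ : ∀ x, ∀ x' ∈ D, (x, g x') ∈ R → φ x' ≤ φ x + 1
  le_of_exit : ∀ x y, (x, y) ∈ R → y ∉ g '' D → n ≤ φ x

theorem isAugPotential_zero (R : Set (X × Y)) (D : Set X) (g : X → Y) :
    IsAugPotential R D g 0 0 :=
  ⟨fun _ _ => rfl, fun _ _ _ _ => Nat.zero_le _, fun _ _ _ _ => Nat.zero_le _⟩

namespace IsAugPotential

theorem apply_le (hφ : IsAugPotential R D g n φ) {x : Fin (m + 1) → X} {y : Fin (m + 1) → Y}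
    (h : IsAugPath R D g m x y) (i : Fin (m + 1)) : φ (x i) ≤ i := by
  obtain ⟨hx0, -, hR, hstep, -⟩ := h
  induction i using Fin.induction with
  | zero => exact (hφ.eq_zero _ hx0).le
  | succ i ih =>
    have hedge : (x i.castSucc, g (x i.succ)) ∈ R := (hstep i).2 ▸ hR i.castSucc
    simpa using (hφ.le_succ _ _ (hstep i).1 hedge).trans (Nat.succ_le_succ ih)

theorem le_length (hφ : IsAugPotential R D g n φ) {x : Fin (m + 1) → X} {y : Fin (m + 1) → Y}
    (h : IsAugPath R D g m x y) : n ≤ m :=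
  (hφ.le_of_exit _ _ (h.2.2.1 (Fin.last m)) h.2.2.2.2).trans (hφ.apply_le h (Fin.last m))

theorem apply_eq (hφ : IsAugPotential R D g n φ) {x : Fin (n + 1) → X} {y : Fin (n + 1) → Y}
    (h : IsAugPath R D g n x y) (i : Fin (n + 1)) : φ (x i) = i := by
  refine (hφ.apply_le h i).antisymm ?_
  obtain ⟨-, -, hR, hstep, hlast⟩ := h
  induction i using Fin.reverseInduction with
  | last => exact hφ.le_of_exit _ _ (hR _) hlast
  | cast i ih =>
    have hedge : (x i.castSucc, g (x i.succ)) ∈ R := (hstep i).2 ▸ hR i.castSucc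
    exact Nat.succ_le_succ_iff.1 (ih.trans (hφ.le_succ _ _ (hstep i).1 hedge))

end IsAugPotential

/-- Reachability from the complement of the domain `D` of the matching by alternating steps that
raise the potential `φ` by exactly one and avoid the set `U`. -/
inductive TightlyReachable (R : Set (X × Y)) (D : Set X) (g : X → Y) (φ : X → ℕ) (U : Set X) :
    X → Prop
  | start {x : X} : x ∉ D → x ∉ U → TightlyReachable R D g φ U x
  | step {x x' : X} : TightlyReachable R D g φ U x → x' ∈ D → x' ∉ U → (x, g x') ∈ R →
      φ x' = φ x + 1 → TightlyReachable R D g φ U x'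

namespace TightlyReachable

variable {U : Set X} {x : X}

theorem exists_seq (hφ : ∀ x ∉ D, φ x = 0) (h : TightlyReachable R D g φ U x) :
    ∃ s : ℕ → X, s 0 ∉ D ∧ s (φ x) = x ∧ (∀ i < φ x, s (i + 1) ∈ D ∧ (s i, g (s (i + 1))) ∈ R) ∧
      ∀ i ≤ φ x, φ (s i) = i ∧ s i ∉ U := by
  induction h with
  | @start x hxD hxU => exact ⟨fun _ => x, hxD, rfl, by simp [hφ x hxD], by simp [hφ x hxD, hxU]⟩
  | @step x x' _ hxD hxU hxR hxx' ih =>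
    obtain ⟨s, hs0, hsx, hstep, hs⟩ := ih
    have hupd : ∀ i ≤ φ x, update s (φ x + 1) x' i = s i := fun i hi =>
      update_of_ne (by omega) _ _
    refine ⟨update s (φ x + 1) x', by rwa [hupd 0 (Nat.zero_le _)], by simp [hxx'],
      fun i hi => ?_, fun i hi => ?_⟩ <;> rw [hxx'] at hi
    · rw [hupd i (by omega)]
      rcases Nat.lt_succ_iff_lt_or_eq.1 hi with hi | rfl
      · rw [hupd (i + 1) hi]
        exact hstep i hi
      · simpa [hsx] using ⟨hxD, hxR⟩
    · rcases Nat.le_succ_iff.1 hi with hi | rfl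
      · rw [hupd i hi]
        exact hs i hi
      · simpa using ⟨hxx', hxU⟩

theorem exists_isAugPath (hφ : ∀ x ∉ D, φ x = 0) (hinj : InjOn g D)
    (h : TightlyReachable R D g φ U x) {y : Y} (hxy : (x, y) ∈ R) (hy : y ∉ g '' D) :
    ∃ p q, IsAugPath R D g (φ x) p q ∧ (∀ i, p i ∉ U) ∧ q (Fin.last _) = y := by
  obtain ⟨s, hs0, hsx, hstep, hs⟩ := h.exists_seq hφ
  have hsD : ∀ i : Fin (φ x), s (i + 1) ∈ D := fun i => (hstep i i.isLt).1
  refine ⟨fun i => s i, Fin.snoc (fun i : Fin (φ x) => g (s (i + 1))) y,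
    ⟨hs0, Fin.snoc_injective_iff.2 ⟨fun i j hij => ?_, ?_⟩, fun i => ?_, fun i => ?_, ?_⟩,
    fun i => (hs i i.is_le).2, Fin.snoc_last _ _⟩
  · have hφs : φ (s (i + 1)) = φ (s (j + 1)) := congrArg φ (hinj (hsD i) (hsD j) hij)
    rw [(hs _ i.isLt).1, (hs _ j.isLt).1] at hφs
    exact Fin.ext (Nat.succ_injective hφs)
  · rintro ⟨i, rfl⟩
    exact hy (mem_image_of_mem g (hsD i))
  · cases i using Fin.lastCases with
    | last => simpa [hsx] using hxy
    | cast i => simpa using (hstep i i.isLt).2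
  · simpa using hsD i
  · simpa using hy

end TightlyReachable

/-- A family of pairwise vertex-disjoint augmenting paths of length `n`. Together with
`IsAugPath.injective_fst` the disjointness amounts to the injectivity of the enumerations of all
vertices. -/
structure IsDisjointAugFamily (R : Set (X × Y)) (D : Set X) (g : X → Y) (n : ℕ)
    (x : ι → Fin (n + 1) → X) (y : ι → Fin (n + 1) → Y) : Prop where
  isAugPath : ∀ t, IsAugPath R D g n (x t) (y t)
  injective_fst : Injective (uncurry x)
  injective_snd : Injective (uncurry y)

/-- The partial injection obtained from `g` by flipping along a family of augmenting paths, its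
domain being enlarged by `range (uncurry x)`. -/
noncomputable def augment (g : X → Y) (x : ι → Fin (n + 1) → X) (y : ι → Fin (n + 1) → Y) : X → Y :=
  extend (uncurry x) (uncurry y) g

theorem augment_of_notMem {x : ι → Fin (n + 1) → X} {y : ι → Fin (n + 1) → Y} {z : X}
    (hz : z ∉ range (uncurry x)) : augment g x y z = g z :=
  extend_apply' _ _ _ hz

namespace IsDisjointAugFamily

variable {x : ι → Fin (n + 1) → X} {y : ι → Fin (n + 1) → Y}

theorem augment_apply (h : IsDisjointAugFamily R D g n x y) (t : ι) (i : Fin (n + 1)) :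
    augment g x y (x t i) = y t i :=
  h.injective_fst.extend_apply _ _ (t, i)

theorem apply_notMem_range (h : IsDisjointAugFamily R D g n x y) (hinj : InjOn g D) {z : X}
    (hz : z ∈ D) (hzx : z ∉ range (uncurry x)) : g z ∉ range (uncurry y) := by
  rintro ⟨⟨t, i⟩, hti⟩
  obtain ⟨-, -, -, hstep, hlast⟩ := h.isAugPath t
  cases i using Fin.lastCases with
  | last => exact hlast ⟨z, hz, hti.symm⟩
  | cast i => exact hzx ⟨(t, i.succ), hinj (hstep i).1 hz ((hstep i).2.trans hti)⟩

theorem injOn_augment (h : IsDisjointAugFamily R D g n x y) (hinj : InjOn g D) :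
    InjOn (augment g x y) (D ∪ range (uncurry x)) := by
  rw [← sdiff_union_self, injOn_union disjoint_sdiff_left]
  refine ⟨fun z hz w hw hzw => ?_, ?_, ?_⟩
  · rw [augment_of_notMem hz.2, augment_of_notMem hw.2] at hzw
    exact hinj hz.1 hw.1 hzw
  · rintro _ ⟨⟨t, i⟩, rfl⟩ _ ⟨⟨u, j⟩, rfl⟩ hzw
    refine congrArg (uncurry x) (h.injective_snd ?_)
    simpa only [uncurry_apply_pair, h.augment_apply] using hzw
  · rintro z hz _ ⟨⟨t, i⟩, rfl⟩ hzw
    rw [augment_of_notMem hz.2, uncurry_apply_pair, h.augment_apply] at hzw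
    exact h.apply_notMem_range hinj hz.1 hz.2 ⟨(t, i), hzw.symm⟩

theorem augment_mem (h : IsDisjointAugFamily R D g n x y) (hg : ∀ z ∈ D, (z, g z) ∈ R) {z : X}
    (hz : z ∈ D ∪ range (uncurry x)) : (z, augment g x y z) ∈ R := by
  by_cases hzx : z ∈ range (uncurry x)
  · obtain ⟨⟨t, i⟩, rfl⟩ := hzx
    exact (h.augment_apply t i).symm ▸ (h.isAugPath t).2.2.1 i
  · exact (augment_of_notMem hzx).symm ▸ hg z (hz.resolve_right hzx)

theorem image_subset_image_augment (h : IsDisjointAugFamily R D g n x y) :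
    g '' D ⊆ augment g x y '' (D ∪ range (uncurry x)) := by
  rintro _ ⟨z, hz, rfl⟩
  by_cases hzx : z ∈ range (uncurry x)
  · obtain ⟨⟨t, i⟩, rfl⟩ := hzx
    obtain ⟨hx0, -, -, hstep, -⟩ := h.isAugPath t
    cases i using Fin.cases with
    | zero => exact (hx0 hz).elim
    | succ i =>
      exact ⟨x t i.castSucc, .inr ⟨(t, _), rfl⟩, (h.augment_apply _ _).trans (hstep i).2.symm⟩
  · exact ⟨z, .inl hz, augment_of_notMem hzx⟩

theorem union_range_sdiff (h : IsDisjointAugFamily R D g n x y) :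
    (D ∪ range (uncurry x)) \ D = range fun t => x t 0 := by
  rw [union_sdiff_left]
  refine Subset.antisymm ?_ (range_subset_iff.2 fun t => ⟨⟨(t, 0), rfl⟩, (h.isAugPath t).1⟩)
  rintro _ ⟨⟨⟨t, i⟩, rfl⟩, hz⟩
  cases i using Fin.cases with
  | zero => exact mem_range_self t
  | succ i => exact (hz ((h.isAugPath t).2.2.2.1 i).1).elim

theorem apply_fst_le_of_mem (h : IsDisjointAugFamily R D g n x y) (hφ : IsAugPotential R D g n φ)
    {z : X} {t : ι} {i : Fin (n + 1)} (hz : (z, y t i) ∈ R) : φ (x t i) ≤ φ z := by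
  rw [hφ.apply_eq (h.isAugPath t)]
  obtain ⟨-, -, -, hstep, hlast⟩ := h.isAugPath t
  cases i using Fin.lastCases with
  | last => exact hφ.le_of_exit _ _ hz hlast
  | cast i =>
    have hle := hφ.le_succ z _ (hstep i).1 ((hstep i).2.symm ▸ hz)
    rw [hφ.apply_eq (h.isAugPath t), Fin.val_succ] at hle
    exact Nat.le_of_succ_le_succ hle

theorem not_tightlyReachable_of_exit (h : IsDisjointAugFamily R D g n x y)
    (hinj : InjOn g D) (hφ : IsAugPotential R D g n φ)
    (hmax : ∀ p q, IsAugPath R D g n p q → ∃ t i j, p i = x t j ∨ q i = y t j) {z : X} {w : Y}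
    (hzw : (z, w) ∈ R) (hw : w ∉ augment g x y '' (D ∪ range (uncurry x))) (hz : φ z = n) :
    ¬ TightlyReachable R D g φ (range (uncurry x)) z := by
  intro hreach
  obtain ⟨p, q, hpq, hp, hq⟩ := hreach.exists_isAugPath hφ.eq_zero hinj hzw
    fun hwg => hw (h.image_subset_image_augment hwg)
  subst hz
  obtain ⟨t, i, j, hij | hij⟩ := hmax p q hpq
  · exact hp i ⟨(t, j), hij.symm⟩
  cases i using Fin.lastCases with
  | last => exact hw ⟨x t j, .inr ⟨(t, j), rfl⟩, by rw [h.augment_apply, ← hij, hq]⟩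
  | cast i =>
    obtain ⟨hD, hgi⟩ := hpq.2.2.2.1 i
    exact h.apply_notMem_range hinj hD (hp _) ⟨(t, j), (hgi.trans hij).symm⟩

open Classical in
theorem isAugPotential_augment (h : IsDisjointAugFamily R D g n x y) (hinj : InjOn g D)
    (hφ : IsAugPotential R D g n φ)
    (hmax : ∀ p q, IsAugPath R D g n p q → ∃ t i j, p i = x t j ∨ q i = y t j) :
    IsAugPotential R (D ∪ range (uncurry x)) (augment g x y) (n + 1) fun z =>
      if TightlyReachable R D g φ (range (uncurry x)) z then φ z else φ z + 1 where
  eq_zero z hz := by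
    rw [mem_union, not_or] at hz
    rw [if_pos (.start hz.1 hz.2), hφ.eq_zero z hz.1]
  le_succ z z' hz' hR := by
    by_cases hz'x : z' ∈ range (uncurry x)
    · have hle : φ z' ≤ φ z := by
        obtain ⟨⟨t, i⟩, rfl⟩ := hz'x
        exact h.apply_fst_le_of_mem hφ (h.augment_apply t i ▸ hR)
      split_ifs <;> omega
    · have hz'D := hz'.resolve_right hz'x
      rw [augment_of_notMem hz'x] at hR
      have hle := hφ.le_succ z z' hz'D hR
      have hreach : TightlyReachable R D g φ (range (uncurry x)) z → φ z' = φ z + 1 →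
          TightlyReachable R D g φ (range (uncurry x)) z' := fun hz => hz.step hz'D hz'x hR
      split_ifs <;> grind
  le_of_exit z w hzw hw := by
    have hle := hφ.le_of_exit z w hzw fun hwg => hw (h.image_subset_image_augment hwg)
    have hreach := h.not_tightlyReachable_of_exit hinj hφ hmax hzw hw
    split_ifs with hz
    · exact hle.lt_of_ne fun hn => hreach hn.symm hz
    · omega

end IsDisjointAugFamily

end AugmentingPaths

section BorelAugmentation

open Function

variable {X Y ι : Type*} {R : Set (X × Y)} {D : Set X} {g : X → Y} {n : ℕ} [MeasurableSpace X]
  [MeasurableSpace Y]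

/-- A Borel partial injection compatible with `R`, encoded as a total Borel function `g` together
with a Borel domain `D`. -/
structure IsBorelMatching (R : Set (X × Y)) (D : Set X) (g : X → Y) : Prop where
  measurableSet : MeasurableSet D
  measurable : Measurable g
  injOn : InjOn g D
  mem : ∀ x ∈ D, (x, g x) ∈ R

variable [MeasurableSpace.CountablySeparated X] [MeasurableSpace ι] [StandardBorelSpace ι]
  {μ : Measure X} {ν : Measure Y}

theorem MeasurePreservingRel.measure_range_eq (hpres : MeasurePreservingRel R μ ν) {u : ι → X}
    {v : ι → Y} (hu : Measurable u) (hv : Measurable v) (huinj : Injective u)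
    (hvinj : Injective v) (huv : ∀ t, (u t, v t) ∈ R) : μ (range u) = ν (range v) := by
  have hue := hu.measurableEmbedding huinj
  rcases isEmpty_or_nonempty ι with _ | ⟨⟨t⟩⟩
  · rw [range_eq_empty, range_eq_empty, measure_empty, measure_empty]
  have hext : ∀ t', extend u v (fun _ => v t) (u t') = v t' := huinj.extend_apply _ _
  rw [hpres (range u) (extend u v fun _ => v t) hue.measurableSet_range
    (hue.measurable_extend hv measurable_const), ← range_comp]
  · exact congrArg (ν <| range ·) (funext hext)
  · rintro _ ⟨a, rfl⟩ _ ⟨b, rfl⟩ hab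
    rw [hext, hext] at hab
    rw [hvinj hab]
  · rintro _ ⟨a, rfl⟩
    exact (hext a).symm ▸ huv a

namespace IsDisjointAugFamily

variable {x : ι → Fin (n + 1) → X} {y : ι → Fin (n + 1) → Y}

theorem isBorelMatching_augment (h : IsDisjointAugFamily R D g n x y) (hM : IsBorelMatching R D g)
    (hx : Measurable x) (hy : Measurable y) :
    IsBorelMatching R (D ∪ range (uncurry x)) (augment g x y) := by
  have hemb : MeasurableEmbedding (uncurry x) := Measurable.measurableEmbedding
    (measurable_from_prod_countable_left (measurable_pi_iff.1 hx)) h.injective_fst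
  have hy' : Measurable (uncurry y) :=
    measurable_from_prod_countable_left (measurable_pi_iff.1 hy)
  exact ⟨hM.measurableSet.union hemb.measurableSet_range, hemb.measurable_extend hy' hM.measurable,
    h.injOn_augment hM.injOn, fun _ => h.augment_mem hM.mem⟩

theorem measure_range_apply (h : IsDisjointAugFamily R D g n x y) (hg : ∀ x ∈ D, (x, g x) ∈ R)
    (hx : Measurable x) (hy : Measurable y) (hpres : MeasurePreservingRel R μ ν) (i : Fin (n + 1)) :
    μ (range fun t => x t i) = μ (range fun t => x t 0) := by
  have hxinj : ∀ i, Injective fun t => x t i := fun i t u htu =>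
    congrArg Prod.fst (@h.injective_fst (t, i) (u, i) htu)
  have hyinj : ∀ i, Injective fun t => y t i := fun i t u htu =>
    congrArg Prod.fst (@h.injective_snd (t, i) (u, i) htu)
  induction i using Fin.induction with
  | zero => rfl
  | succ i ih =>
    have hmem : ∀ t, (x t i.succ, y t i.castSucc) ∈ R := fun t => by
      obtain ⟨-, -, -, hstep, -⟩ := h.isAugPath t
      exact (hstep i).2 ▸ hg _ (hstep i).1
    rw [← ih, hpres.measure_range_eq (by fun_prop) (by fun_prop) (hxinj _) (hyinj i.castSucc) hmem,
      hpres.measure_range_eq (by fun_prop) (by fun_prop) (hxinj _) (hyinj i.castSucc)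
        fun t => (h.isAugPath t).2.2.1 _]

theorem measure_range_uncurry_le (h : IsDisjointAugFamily R D g n x y) (hg : ∀ x ∈ D, (x, g x) ∈ R)
    (hx : Measurable x) (hy : Measurable y) (hpres : MeasurePreservingRel R μ ν) :
    μ (range (uncurry x)) ≤ (n + 1 : ℕ) * μ ((D ∪ range (uncurry x)) \ D) :=
  calc μ (range (uncurry x)) ≤ μ (⋃ i, range fun t => x t i) := by
        refine measure_mono ?_
        rintro _ ⟨⟨t, i⟩, rfl⟩
        exact mem_iUnion.2 ⟨i, t, rfl⟩
    _ ≤ ∑ i : Fin (n + 1), μ (range fun t => x t i) := measure_iUnion_fintype_le _ _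
    _ = ∑ _i : Fin (n + 1), μ (range fun t => x t 0) :=
        Finset.sum_congr rfl fun i _ => h.measure_range_apply hg hx hy hpres i
    _ = (n + 1 : ℕ) * μ ((D ∪ range (uncurry x)) \ D) := by
        rw [h.union_range_sdiff, Finset.sum_const, Finset.card_univ, Fintype.card_fin,
          nsmul_eq_mul]

end IsDisjointAugFamily

end BorelAugmentation

section MaximalFamily

open Function

theorem finite_setOf_chain_apply_eq {X : Type*} {r : X → X → Prop} (hfwd : ∀ a, {b | r a b}.Finite)
    (hbwd : ∀ b, {a | r a b}.Finite) {n : ℕ} (j : Fin (n + 1)) (a : X) :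
    {s : Fin (n + 1) → X | (∀ i : Fin n, r (s i.castSucc) (s i.succ)) ∧ s j = a}.Finite := by
  set S := {s : Fin (n + 1) → X | (∀ i : Fin n, r (s i.castSucc) (s i.succ)) ∧ s j = a}
  have hsucc : ∀ i : Fin n, (eval i.castSucc '' S).Finite ↔ (eval i.succ '' S).Finite := by
    refine fun i => ⟨fun h => (h.biUnion fun b _ => hfwd b).subset ?_,
      fun h => (h.biUnion fun b _ => hbwd b).subset ?_⟩ <;> rintro _ ⟨s, hs, rfl⟩
    · exact mem_biUnion (mem_image_of_mem _ hs) (hs.1 i)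
    · exact mem_biUnion (mem_image_of_mem _ hs) (hs.1 i)
  have hzero : ∀ i, (eval i '' S).Finite ↔ (eval 0 '' S).Finite := fun i => by
    induction i using Fin.induction with
    | zero => rfl
    | succ i ih => rw [← hsucc, ih]
  have hj : (eval j '' S).Finite :=
    (finite_singleton a).subset (image_subset_iff.2 fun s hs => hs.2)
  have hall : ∀ i, (eval i '' S).Finite := fun i => (hzero i).2 ((hzero j).1 hj)
  exact (Finite.pi' hall).subset fun s hs i => mem_image_of_mem _ hs

variable {X Y ι : Type*} {R : Set (X × Y)} {D : Set X} {g : X → Y} {n : ℕ}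

/-- The graph whose edges join two distinct augmenting paths of length `n` that share a vertex.
Sequences that are not augmenting paths are kept as isolated vertices, so that the vertex set is
a product space. -/
def augPathGraph (R : Set (X × Y)) (D : Set X) (g : X → Y) (n : ℕ) :
    SimpleGraph ((Fin (n + 1) → X) × (Fin (n + 1) → Y)) where
  Adj p q := p ≠ q ∧ IsAugPath R D g n p.1 p.2 ∧ IsAugPath R D g n q.1 q.2 ∧
    ∃ i j, p.1 i = q.1 j ∨ p.2 i = q.2 j
  symm := ⟨fun _ _ ⟨hne, hp, hq, i, j, hij⟩ => ⟨hne.symm, hq, hp, j, i, hij.imp .symm .symm⟩⟩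
  loopless := ⟨fun _ h => h.1 rfl⟩

theorem isDisjointAugFamily_of_isIndepSet {T : Set ((Fin (n + 1) → X) × (Fin (n + 1) → Y))}
    (hT : ∀ p ∈ T, IsAugPath R D g n p.1 p.2) (hind : (augPathGraph R D g n).IsIndepSet T) :
    IsDisjointAugFamily R D g n (fun p : T => p.1.1) (fun p : T => p.1.2) := by
  have heq : ∀ (p q : T) i j, p.1.1 i = q.1.1 j ∨ p.1.2 i = q.1.2 j → p = q := by
    intro p q i j hij
    by_contra hpq
    have hne : p.1 ≠ q.1 := fun h => hpq (Subtype.ext h)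
    exact hind p.2 q.2 hne ⟨hne, hT _ p.2, hT _ q.2, i, j, hij⟩
  refine ⟨fun p => hT _ p.2, ?_, ?_⟩ <;> rintro ⟨p, i⟩ ⟨q, j⟩ hij
  · obtain rfl := heq p q i j (.inl hij)
    exact congrArg _ ((hT _ p.2).injective_fst hij)
  · obtain rfl := heq p q i j (.inr hij)
    exact congrArg _ ((hT _ p.2).2.1 hij)

theorem finite_setOf_isAugPath_fst_apply_eq (hlocX : ∀ x : X, {y | (x, y) ∈ R}.Finite)
    (hlocY : ∀ y : Y, {x | (x, y) ∈ R}.Finite) (hg : ∀ x ∈ D, (x, g x) ∈ R) (i : Fin (n + 1))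
    (a : X) :
    {p : (Fin (n + 1) → X) × (Fin (n + 1) → Y) | IsAugPath R D g n p.1 p.2 ∧ p.1 i = a}.Finite := by
  let r : X → X → Prop := fun x x' => ∃ y, (x, y) ∈ R ∧ (x', y) ∈ R
  have hfwd : ∀ x, {x' | r x x'}.Finite := fun x =>
    ((hlocX x).biUnion fun y _ => hlocY y).subset fun x' ⟨y, hy, hy'⟩ => mem_biUnion hy hy'
  have hbwd : ∀ x', {x | r x x'}.Finite := fun x' =>
    ((hlocX x').biUnion fun y _ => hlocY y).subset fun x ⟨y, hy, hy'⟩ => mem_biUnion hy' hy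
  refine ((finite_setOf_chain_apply_eq hfwd hbwd i a).biUnion fun s _ =>
    (finite_singleton s).prod (Finite.pi' fun k => hlocX (s k))).subset ?_
  rintro ⟨p, q⟩ ⟨⟨-, -, hR, hstep, -⟩, hi⟩
  refine mem_biUnion ⟨fun k => ⟨q k.castSucc, hR _, ?_⟩, hi⟩ ⟨rfl, hR⟩
  exact (hstep k).2.subst (motive := fun y => (p k.succ, y) ∈ R) (hg _ (hstep k).1)

theorem finite_neighborSet_augPathGraph (hlocX : ∀ x : X, {y | (x, y) ∈ R}.Finite)
    (hlocY : ∀ y : Y, {x | (x, y) ∈ R}.Finite) (hg : ∀ x ∈ D, (x, g x) ∈ R)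
    (p : (Fin (n + 1) → X) × (Fin (n + 1) → Y)) :
    ((augPathGraph R D g n).neighborSet p).Finite := by
  have hfin := finite_setOf_isAugPath_fst_apply_eq (n := n) hlocX hlocY hg
  refine (finite_iUnion fun i => finite_iUnion fun j => (hfin j (p.1 i)).union
    ((hlocY (p.2 i)).biUnion fun a _ => hfin j a)).subset ?_
  rintro q ⟨-, -, hq, i, j, hij⟩
  refine mem_iUnion₂.2 ⟨i, j, hij.imp (fun h => ⟨hq, h.symm⟩) fun h => ?_⟩
  exact mem_biUnion (show (q.1 j, p.2 i) ∈ R from h ▸ hq.2.2.1 j) ⟨hq, rfl⟩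

variable [MeasurableSpace X] [StandardBorelSpace X] [MeasurableSpace Y] [StandardBorelSpace Y]

theorem measurableSet_setOf_isAugPath (hR : MeasurableSet R) (h : IsBorelMatching R D g) (n : ℕ) :
    MeasurableSet {p : (Fin (n + 1) → X) × (Fin (n + 1) → Y) | IsAugPath R D g n p.1 p.2} := by
  have hD := h.measurableSet
  have hg := h.measurable
  have himage : MeasurableSet (g '' D) := hD.image_of_measurable_injOn hg h.injOn
  have hinj : ∀ i j, Measurable fun p : (Fin (n + 1) → X) × (Fin (n + 1) → Y) =>
      p.2 i = p.2 j := fun i j =>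
    measurableSet_setOfPred.1 (measurableSet_eq_fun (by fun_prop) (by fun_prop))
  have hstep : ∀ i : Fin n, Measurable fun p : (Fin (n + 1) → X) × (Fin (n + 1) → Y) =>
      g (p.1 i.succ) = p.2 i.castSucc := fun i =>
    measurableSet_setOfPred.1 (measurableSet_eq_fun (by fun_prop) (by fun_prop))
  refine measurableSet_setOfPred.2 ?_
  exact .and (by fun_prop) <|
    .and (.forall fun i => .forall fun j => (hinj i j).imp measurable_const) <|
    .and (by fun_prop) <| .and (.forall fun i => .and (by fun_prop) (hstep i)) (by fun_prop)

theorem measurableSet_augPathGraph (hR : MeasurableSet R) (h : IsBorelMatching R D g) (n : ℕ) :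
    MeasurableSet {r : ((Fin (n + 1) → X) × (Fin (n + 1) → Y)) ×
      ((Fin (n + 1) → X) × (Fin (n + 1) → Y)) | (augPathGraph R D g n).Adj r.1 r.2} := by
  have hpath := measurableSet_setOf_isAugPath hR h n
  refine (measurableSet_eq_fun measurable_fst measurable_snd).compl.inter <|
    (measurable_fst hpath).inter <| (measurable_snd hpath).inter <| measurableSet_setOfPred.2 <|
    .exists fun i => .exists fun j => .or ?_ ?_ <;>
  exact measurableSet_setOfPred.1 (measurableSet_eq_fun (by fun_prop) (by fun_prop))

theorem exists_measurableSet_maximal_isDisjointAugFamily (hR : MeasurableSet R)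
    (hlocX : ∀ x : X, {y | (x, y) ∈ R}.Finite) (hlocY : ∀ y : Y, {x | (x, y) ∈ R}.Finite)
    (h : IsBorelMatching R D g) (n : ℕ) :
    ∃ T : Set ((Fin (n + 1) → X) × (Fin (n + 1) → Y)), MeasurableSet T ∧
      IsDisjointAugFamily R D g n (fun p : T => p.1.1) (fun p : T => p.1.2) ∧
      ∀ p q, IsAugPath R D g n p q → ∃ t : T, ∃ i j, p i = t.1.1 j ∨ q i = t.1.2 j := by
  obtain ⟨T, hT, hind, hmax⟩ := exists_measurableSet_maximal_isIndepSet
    (measurableSet_augPathGraph hR h n) (finite_neighborSet_augPathGraph hlocX hlocY h.mem)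
  refine ⟨T ∩ {p | IsAugPath R D g n p.1 p.2}, hT.inter (measurableSet_setOf_isAugPath hR h n),
    isDisjointAugFamily_of_isIndepSet (fun p hp => hp.2) (hind.mono inter_subset_left),
    fun p q hpq => ?_⟩
  by_cases hpT : (p, q) ∈ T
  · exact ⟨⟨(p, q), hpT, hpq⟩, 0, 0, .inl rfl⟩
  · obtain ⟨t, htT, -, -, ht, i, j, hij⟩ := hmax _ hpT
    exact ⟨⟨t, htT, ht⟩, i, j, hij⟩

end MaximalFamily

section Iteration

variable {X Y : Type*} {R : Set (X × Y)} {D D' D'' : Set X} {g g' g'' : X → Y} {n : ℕ}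

/-- The set of points of `D'` at which the partial function `g'` with domain `D'` is not given by
the partial function `g` with domain `D`. -/
def changeSet (D : Set X) (g : X → Y) (D' : Set X) (g' : X → Y) : Set X :=
  {x | x ∈ D' ∧ (x ∉ D ∨ g' x ≠ g x)}

theorem changeSet_self (D : Set X) (g : X → Y) : changeSet D g D g = ∅ := by
  simp [changeSet]

theorem changeSet_subset_union :
    changeSet D g D'' g'' ⊆ changeSet D g D' g' ∪ changeSet D' g' D'' g'' := by
  rintro x ⟨hx, hne⟩
  by_cases hx' : x ∈ D' ∧ g'' x = g' x
  · exact .inl ⟨hx'.1, hx'.2 ▸ hne⟩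
  · exact .inr ⟨hx, not_and_or.1 hx'⟩

theorem changeSet_augment_subset {ι : Type*} {x : ι → Fin (n + 1) → X} {y : ι → Fin (n + 1) → Y} :
    changeSet D g (D ∪ range (Function.uncurry x)) (augment g x y) ⊆
      range (Function.uncurry x) := by
  rintro z ⟨hz, hne⟩
  by_contra hzx
  exact hne.elim (fun h => h (hz.resolve_right hzx)) fun h => h (augment_of_notMem hzx)

variable [MeasurableSpace X] [StandardBorelSpace X] [MeasurableSpace Y] [StandardBorelSpace Y]
  {μ : Measure X} {ν : Measure Y}

theorem IsBorelMatching.exists_isAugPotential_succ (h : IsBorelMatching R D g)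
    (hR : MeasurableSet R) (hlocX : ∀ x : X, {y | (x, y) ∈ R}.Finite)
    (hlocY : ∀ y : Y, {x | (x, y) ∈ R}.Finite) (hpres : MeasurePreservingRel R μ ν)
    {φ : X → ℕ} (hφ : IsAugPotential R D g n φ) :
    ∃ D' g', IsBorelMatching R D' g' ∧ D ⊆ D' ∧ (∃ φ', IsAugPotential R D' g' (n + 1) φ') ∧
      μ (changeSet D g D' g') ≤ (n + 1 : ℕ) * μ (D' \ D) := by
  obtain ⟨T, hT, hdisj, hmax⟩ :=
    exists_measurableSet_maximal_isDisjointAugFamily hR hlocX hlocY h n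
  have := hT.standardBorel
  have hx : Measurable fun p : T => p.1.1 := by fun_prop
  have hy : Measurable fun p : T => p.1.2 := by fun_prop
  exact ⟨_, _, hdisj.isBorelMatching_augment h hx hy, subset_union_left,
    ⟨_, hdisj.isAugPotential_augment h.injOn hφ hmax⟩,
    (measure_mono changeSet_augment_subset).trans
      (hdisj.measure_range_uncurry_le h.mem hx hy hpres)⟩

theorem IsBorelMatching.exists_isAugPotential (h : IsBorelMatching R D g)
    (hR : MeasurableSet R) (hlocX : ∀ x : X, {y | (x, y) ∈ R}.Finite)
    (hlocY : ∀ y : Y, {x | (x, y) ∈ R}.Finite) (hpres : MeasurePreservingRel R μ ν) (n : ℕ) :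
    ∃ D' g', IsBorelMatching R D' g' ∧ D ⊆ D' ∧ (∃ φ, IsAugPotential R D' g' n φ) ∧
      μ (changeSet D g D' g') ≤ n * μ (D' \ D) := by
  induction n with
  | zero => exact ⟨D, g, h, Subset.rfl, ⟨_, isAugPotential_zero R D g⟩, by simp [changeSet_self]⟩
  | succ n ih =>
    obtain ⟨D', g', h', hDD', ⟨φ, hφ⟩, hμ⟩ := ih
    obtain ⟨D'', g'', h'', hD'D'', hφ', hμ'⟩ :=
      h'.exists_isAugPotential_succ hR hlocX hlocY hpres hφ
    refine ⟨D'', g'', h'', hDD'.trans hD'D'', hφ', ?_⟩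
    have hadd : μ (D' \ D) + μ (D'' \ D') = μ (D'' \ D) := by
      rw [← measure_union (disjoint_sdiff_right.mono_left sdiff_subset)
        (h''.measurableSet.diff h'.measurableSet), union_comm, sdiff_union_sdiff_cancel hD'D'' hDD']
    calc μ (changeSet D g D'' g'')
        ≤ μ (changeSet D g D' g') + μ (changeSet D' g' D'' g'') :=
          (measure_mono changeSet_subset_union).trans (measure_union_le _ _)
      _ ≤ n * μ (D' \ D) + (n + 1 : ℕ) * μ (D'' \ D') := add_le_add hμ hμ'
      _ ≤ (n + 1 : ℕ) * μ (D' \ D) + (n + 1 : ℕ) * μ (D'' \ D') := by gcongr; exact n.le_succ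
      _ = (n + 1 : ℕ) * μ (D'' \ D) := by rw [← mul_add, hadd]

end Iteration

theorem stmt4_general {X Y : Type*} [MeasurableSpace X] [StandardBorelSpace X]
    [MeasurableSpace Y] [StandardBorelSpace Y] (μ : Measure X) (ν : Measure Y)
    (R : Set (X × Y)) (hR : MeasurableSet R)
    (hlocX : ∀ x : X, {y | (x, y) ∈ R}.Finite)
    (hlocY : ∀ y : Y, {x | (x, y) ∈ R}.Finite)
    (hpres : MeasurePreservingRel R μ ν)
    (D : Set X) (g : X → Y) (hD : MeasurableSet D) (hg : Measurable g)
    (hinj : Set.InjOn g D) (hcomp : ∀ x ∈ D, (x, g x) ∈ R) (n : ℕ) :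
    ∃ (D' : Set X) (g' : X → Y), MeasurableSet D' ∧ Measurable g' ∧
      Set.InjOn g' D' ∧ (∀ x ∈ D', (x, g' x) ∈ R) ∧ D ⊆ D' ∧
      (∀ m, m < n → ∀ (x : Fin (m + 1) → X) (y : Fin (m + 1) → Y),
        ¬ IsAugPath R D' g' m x y) ∧
      μ {x | x ∈ D' ∧ (x ∉ D ∨ g' x ≠ g x)} ≤ n * μ (D' \ D) := by
  have h : IsBorelMatching R D g := ⟨hD, hg, hinj, hcomp⟩
  obtain ⟨D', g', h', hDD', ⟨φ, hφ⟩, hμ⟩ := h.exists_isAugPotential hR hlocX hlocY hpres n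
  exact ⟨D', g', h'.measurableSet, h'.measurable, h'.injOn, h'.mem, hDD',
    fun m hm x y hxy => hm.not_ge (hφ.le_length hxy), hμ⟩

/-- **Elek–Lippner augmenting-path improvement.** Given a Borel partial injection `g` (with
Borel domain `D`) compatible with `R` and `n ≥ 1`, there is a Borel partial injection `g'`
(with Borel domain `D' ⊇ D`) compatible with `R`, admitting no augmenting paths of length
less than `n`, and differing from `g` on a set of measure at most `n·μ(X ∖ D)`. -/
theorem stmt4 {X Y : Type*} [MeasurableSpace X] [StandardBorelSpace X]
    [MeasurableSpace Y] [StandardBorelSpace Y]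
    (μ : Measure X) [IsProbabilityMeasure μ] (ν : Measure Y)
    (R : Set (X × Y)) (hR : MeasurableSet R)
    (hlocX : ∀ x : X, {y | (x, y) ∈ R}.Finite)
    (hlocY : ∀ y : Y, {x | (x, y) ∈ R}.Finite)
    (hpres : MeasurePreservingRel R μ ν)
    (D : Set X) (g : X → Y) (hD : MeasurableSet D) (hg : Measurable g)
    (hinj : Set.InjOn g D) (hcomp : ∀ x ∈ D, (x, g x) ∈ R)
    (n : ℕ) (hn : 1 ≤ n) :
    ∃ (D' : Set X) (g' : X → Y), MeasurableSet D' ∧ Measurable g' ∧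
      Set.InjOn g' D' ∧ (∀ x ∈ D', (x, g' x) ∈ R) ∧ D ⊆ D' ∧
      (∀ m, m < n → ∀ (x : Fin (m + 1) → X) (y : Fin (m + 1) → Y),
        ¬ IsAugPath R D' g' m x y) ∧
      μ {x | x ∈ D' ∧ (x ∉ D ∨ g' x ≠ g x)} ≤ n * μ Dᶜ := by
  obtain ⟨D', g', hD', hg', hinj', hcomp', hDD', haug, hμ⟩ :=
    stmt4_general μ ν R hR hlocX hlocY hpres D g hD hg hinj hcomp n
  exact ⟨D', g', hD', hg', hinj', hcomp', hDD', haug,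
    hμ.trans (by gcongr; exact sdiff_subset_compl _ _)⟩
end
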